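/- Let S be a connected quasi-hereditary algebra with a simple-preserving duality whose partial order is minimal for the quasi-hereditary structure. If S satisfies property A (μ < λ implies gfd(L(μ)) ≤ gfd(L(λ))) and property C (wfd(∇(λ)) = gfd(S) − inj(∇(λ)) for all λ), then S satisfies property E (μ < λ implies inj(∇(μ)) ≥ inj(∇(λ))). -/

import Mathlib

/-!
Common definitions for formalizing "On the global and ∇-filtration dimensions of
quasi-hereditary algebras" by Erdmann and Parker.

We work with a finite-dimensional algebra `S` over a field `k`; since `S` is
finite dimensional over `k`, the finite-dimensional `S`-modules are exactly the
finitely generated ones, so we express finite-dimensionality of a module `M` as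
`Module.Finite S M`.
-/

open CategoryTheory

namespace QHPaper

variable (S : Type) [Ring S]

/-- The subquotient `B ⧸ A` associated to two submodules `A B` of `M`. -/
abbrev subquot {M : ModuleCat.{0} S} (A B : Submodule S ↥M) : Type :=
  ↥B ⧸ (Submodule.comap B.subtype A)

/-- A filtration `⊥ = f 0 ≤ f 1 ≤ ⋯ ≤ f n = ⊤` of `M` whose `i`-th section
`f (i+1) / f i` is isomorphic to the prescribed module `D i`. -/
def HasFiltrationWithSections (M : ModuleCat.{0} S) (n : ℕ)
    (f : Fin (n + 1) → Submodule S ↥M) (D : Fin n → ModuleCat.{0} S) : Prop :=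
  Monotone f ∧ f 0 = ⊥ ∧ f (Fin.last n) = ⊤ ∧
    ∀ i : Fin n, Nonempty ((subquot S (f i.castSucc) (f i.succ)) ≃ₗ[S] ↥(D i))

/-- `L` occurs as a (simple) subquotient of `M`; for `L` simple this says that `L`
is a composition factor of `M`. -/
def IsCompFactor (L M : ModuleCat.{0} S) : Prop :=
  ∃ (A B : Submodule S ↥M), A ≤ B ∧ Nonempty ((subquot S A B) ≃ₗ[S] ↥L)

/-- `L` occurs with multiplicity `m` among the sections of a composition series of `M`. -/
def CompFactorMult (L M : ModuleCat.{0} S) (m : ℕ) : Prop :=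
  ∃ (n : ℕ) (f : Fin (n + 1) → Submodule S ↥M),
    Monotone f ∧ f 0 = ⊥ ∧ f (Fin.last n) = ⊤ ∧
    (∀ i : Fin n, IsSimpleModule S (subquot S (f i.castSucc) (f i.succ))) ∧
    Nat.card {i : Fin n // Nonempty ((subquot S (f i.castSucc) (f i.succ)) ≃ₗ[S] ↥L)} = m

/-- `P` is a projective cover of `M`: `P` is projective and there is a surjection
`P → M` whose kernel is superfluous in `P`. -/
def IsProjCover (P M : ModuleCat.{0} S) : Prop :=
  Module.Projective S ↥P ∧ ∃ π : ↥P →ₗ[S] ↥M, Function.Surjective π ∧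
    ∀ N : Submodule S ↥P, N ⊔ LinearMap.ker π = ⊤ → N = ⊤

/-- `I` is an injective hull of `M`: `I` is injective and there is an injection
`M → I` with essential image. -/
def IsInjHull (I M : ModuleCat.{0} S) : Prop :=
  Module.Injective S ↥I ∧ ∃ ι : ↥M →ₗ[S] ↥I, Function.Injective ι ∧
    ∀ N : Submodule S ↥I, N ⊓ LinearMap.range ι = ⊥ → N = ⊥

/-- The data of a quasi-hereditary algebra structure on `S` with weight poset `Λ`:
a full set `L` of pairwise non-isomorphic simple modules, their projective covers `P`
and injective hulls `I`, the standard modules `std` (largest quotient of `P lam` with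
all composition factors `L mu`, `mu ≤ lam`), the costandard modules `costd`
(largest submodule of `I lam` with all composition factors `L mu`, `mu ≤ lam`),
such that `L lam` occurs exactly once in `std lam` and `P lam` is filtered by
standard modules `std mu` with `mu ≥ lam`, with `std lam` occurring exactly once. -/
structure QHData (Λ : Type) [Fintype Λ] [PartialOrder Λ] where
  L : Λ → ModuleCat.{0} S
  P : Λ → ModuleCat.{0} S
  I : Λ → ModuleCat.{0} S
  std : Λ → ModuleCat.{0} S
  costd : Λ → ModuleCat.{0} S
  finiteL : ∀ lam, Module.Finite S ↥(L lam)
  simpleL : ∀ lam, IsSimpleModule S ↥(L lam)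
  nonisoL : ∀ lam mu, lam ≠ mu → IsEmpty (↥(L lam) ≃ₗ[S] ↥(L mu))
  fullL : ∀ M : ModuleCat.{0} S, IsSimpleModule S ↥M → ∃ lam, Nonempty (↥M ≃ₗ[S] ↥(L lam))
  projCover : ∀ lam, IsProjCover S (P lam) (L lam)
  injHull : ∀ lam, IsInjHull S (I lam) (L lam)
  stdSpec : ∀ lam, ∃ K : Submodule S ↥(P lam),
    Nonempty (↥(std lam) ≃ₗ[S] (↥(P lam) ⧸ K)) ∧
    (∀ mu, IsCompFactor S (L mu) (ModuleCat.of S (↥(P lam) ⧸ K)) → mu ≤ lam) ∧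
    ∀ K' : Submodule S ↥(P lam),
      (∀ mu, IsCompFactor S (L mu) (ModuleCat.of S (↥(P lam) ⧸ K')) → mu ≤ lam) → K ≤ K'
  costdSpec : ∀ lam, ∃ V : Submodule S ↥(I lam),
    Nonempty (↥(costd lam) ≃ₗ[S] ↥V) ∧
    (∀ mu, IsCompFactor S (L mu) (ModuleCat.of S ↥V) → mu ≤ lam) ∧
    ∀ V' : Submodule S ↥(I lam),
      (∀ mu, IsCompFactor S (L mu) (ModuleCat.of S ↥V') → mu ≤ lam) → V' ≤ V
  multOne : ∀ lam, CompFactorMult S (L lam) (std lam) 1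
  projFilt : ∀ lam, ∃ (n : ℕ) (f : Fin (n + 1) → Submodule S ↥(P lam)) (g : Fin n → Λ),
    HasFiltrationWithSections S (P lam) n f (fun i => std (g i)) ∧
    (∀ i, lam ≤ g i) ∧ Nat.card {i : Fin n // g i = lam} = 1

variable {Λ : Type} [Fintype Λ] [PartialOrder Λ]

/-- `M` has a filtration with costandard sections, i.e. `M ∈ F(∇)`. -/
def InCostdFilt (Q : QHData S Λ) (M : ModuleCat.{0} S) : Prop :=
  ∃ (n : ℕ) (f : Fin (n + 1) → Submodule S ↥M) (g : Fin n → Λ),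
    HasFiltrationWithSections S M n f (fun i => Q.costd (g i))

/-- `M` has a filtration with standard sections, i.e. `M ∈ F(Δ)`. -/
def InStdFilt (Q : QHData S Λ) (M : ModuleCat.{0} S) : Prop :=
  ∃ (n : ℕ) (f : Fin (n + 1) → Submodule S ↥M) (g : Fin n → Λ),
    HasFiltrationWithSections S M n f (fun i => Q.std (g i))

/-- `0 → N 0 → N 1 → ⋯ → N (n+1) → 0` is exact. -/
def IsExactSeq (n : ℕ) (N : Fin (n + 2) → ModuleCat.{0} S)
    (f : ∀ i : Fin (n + 1), ↥(N i.castSucc) →ₗ[S] ↥(N i.succ)) : Prop :=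
  Function.Injective (f 0) ∧ Function.Surjective (f (Fin.last n)) ∧
    ∀ i : Fin n, LinearMap.range (f i.castSucc) = LinearMap.ker (f i.succ)

/-- `M` has a ∇-resolution (co-resolution by modules in `F(∇)`) of length `d`:
`0 → M → M₀ → ⋯ → M_d → 0` with each `Mᵢ ∈ F(∇)`. -/
def GfdLE (Q : QHData S Λ) (M : ModuleCat.{0} S) (d : ℕ) : Prop :=
  ∃ (N : Fin (d + 2) → ModuleCat.{0} S)
    (f : ∀ i : Fin (d + 1), ↥(N i.castSucc) →ₗ[S] ↥(N i.succ)),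
    IsExactSeq S d N f ∧ N 0 = M ∧ ∀ i : Fin (d + 1), InCostdFilt S Q (N i.succ)

/-- The ∇-filtration dimension (good filtration dimension) of a module. -/
noncomputable def gfd (Q : QHData S Λ) (M : ModuleCat.{0} S) : ℕ :=
  sInf {d | GfdLE S Q M d}

/-- `M` has a resolution `0 → M_d → ⋯ → M₀ → M → 0` with each `Mᵢ ∈ F(Δ)`. -/
def WfdLE (Q : QHData S Λ) (M : ModuleCat.{0} S) (d : ℕ) : Prop :=
  ∃ (N : Fin (d + 2) → ModuleCat.{0} S)
    (f : ∀ i : Fin (d + 1), ↥(N i.castSucc) →ₗ[S] ↥(N i.succ)),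
    IsExactSeq S d N f ∧ N (Fin.last (d + 1)) = M ∧
    ∀ i : Fin (d + 1), InStdFilt S Q (N i.castSucc)

/-- The Δ-filtration dimension of a module. -/
noncomputable def wfd (Q : QHData S Λ) (M : ModuleCat.{0} S) : ℕ :=
  sInf {d | WfdLE S Q M d}

/-- `M` has a projective resolution of length `d`. -/
def ProjdimLE (M : ModuleCat.{0} S) (d : ℕ) : Prop :=
  ∃ (N : Fin (d + 2) → ModuleCat.{0} S)
    (f : ∀ i : Fin (d + 1), ↥(N i.castSucc) →ₗ[S] ↥(N i.succ)),
    IsExactSeq S d N f ∧ N (Fin.last (d + 1)) = M ∧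
    ∀ i : Fin (d + 1), Module.Projective S ↥(N i.castSucc)

/-- The projective dimension of a module. -/
noncomputable def projdim (M : ModuleCat.{0} S) : ℕ :=
  sInf {d | ProjdimLE S M d}

/-- `M` has an injective resolution of length `d`. -/
def InjdimLE (M : ModuleCat.{0} S) (d : ℕ) : Prop :=
  ∃ (N : Fin (d + 2) → ModuleCat.{0} S)
    (f : ∀ i : Fin (d + 1), ↥(N i.castSucc) →ₗ[S] ↥(N i.succ)),
    IsExactSeq S d N f ∧ N 0 = M ∧
    ∀ i : Fin (d + 1), Module.Injective S ↥(N i.succ)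

/-- The injective dimension of a module. -/
noncomputable def injdim (M : ModuleCat.{0} S) : ℕ :=
  sInf {d | InjdimLE S M d}

/-- `gfd(S)`: the supremum of the ∇-filtration dimensions of all
finite-dimensional `S`-modules. -/
noncomputable def gfdAlg (Q : QHData S Λ) : ℕ :=
  sSup {d | ∃ M : ModuleCat.{0} S, Module.Finite S ↥M ∧ gfd S Q M = d}

/-- `wfd(S)`: the supremum of the Δ-filtration dimensions of all
finite-dimensional `S`-modules. -/
noncomputable def wfdAlg (Q : QHData S Λ) : ℕ :=
  sSup {d | ∃ M : ModuleCat.{0} S, Module.Finite S ↥M ∧ wfd S Q M = d}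

/-- The global dimension of `S`: the supremum of the projective dimensions of all
finite-dimensional `S`-modules. -/
noncomputable def globdim : ℕ :=
  sSup {d | ∃ M : ModuleCat.{0} S, Module.Finite S ↥M ∧ projdim S M = d}

/-- `Ext^n_S(A, B) ≠ 0`. -/
noncomputable def extNe (A B : ModuleCat.{0} S) (n : ℕ) : Prop :=
  Nontrivial ↥(((Ext ℤ (ModuleCat.{0} S) n).obj (Opposite.op A)).obj B)

/-- A simple-preserving duality on `S`: a contravariant, exact, fully faithful,
additive self-functor `D` on the category of finite-dimensional `S`-modules with
`D (D M) ≅ M` and `D (L lam) ≅ L lam` for all `lam`. -/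
structure Duality (Q : QHData S Λ) where
  D : ModuleCat.{0} S → ModuleCat.{0} S
  Dmap : ∀ {A B : ModuleCat.{0} S}, (↥A →ₗ[S] ↥B) → (↥(D B) →ₗ[S] ↥(D A))
  finD : ∀ M : ModuleCat.{0} S, Module.Finite S ↥M → Module.Finite S ↥(D M)
  Did : ∀ A : ModuleCat.{0} S, Module.Finite S ↥A →
    Dmap (LinearMap.id : ↥A →ₗ[S] ↥A) = LinearMap.id
  Dcomp : ∀ {A B C : ModuleCat.{0} S}, Module.Finite S ↥A → Module.Finite S ↥B →
    Module.Finite S ↥C → ∀ (f : ↥A →ₗ[S] ↥B) (g : ↥B →ₗ[S] ↥C),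
      Dmap (g ∘ₗ f) = Dmap f ∘ₗ Dmap g
  Dadd : ∀ {A B : ModuleCat.{0} S}, Module.Finite S ↥A → Module.Finite S ↥B →
    ∀ (f g : ↥A →ₗ[S] ↥B), Dmap (f + g) = Dmap f + Dmap g
  Dfull : ∀ {A B : ModuleCat.{0} S}, Module.Finite S ↥A → Module.Finite S ↥B →
    Function.Bijective (fun f : ↥A →ₗ[S] ↥B => Dmap f)
  Dexact : ∀ {A B C : ModuleCat.{0} S}, Module.Finite S ↥A → Module.Finite S ↥B →
    Module.Finite S ↥C → ∀ (f : ↥A →ₗ[S] ↥B) (g : ↥B →ₗ[S] ↥C),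
      Function.Injective f → Function.Surjective g →
      LinearMap.range f = LinearMap.ker g →
      Function.Injective (Dmap g) ∧ Function.Surjective (Dmap f) ∧
        LinearMap.range (Dmap g) = LinearMap.ker (Dmap f)
  Dinvol : ∀ M : ModuleCat.{0} S, Module.Finite S ↥M → Nonempty (↥(D (D M)) ≃ₗ[S] ↥M)
  DL : ∀ lam, Nonempty (↥(D (Q.L lam)) ≃ₗ[S] ↥(Q.L lam))

/-- Strong property A: `mu < lam` implies `gfd (L mu) < gfd (L lam)`. -/
def StrongPropA (Q : QHData S Λ) : Prop :=
  ∀ mu lam : Λ, mu < lam → gfd S Q (Q.L mu) < gfd S Q (Q.L lam)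

/-- Property A: `mu < lam` implies `gfd (L mu) ≤ gfd (L lam)`. -/
def PropA (Q : QHData S Λ) : Prop :=
  ∀ mu lam : Λ, mu < lam → gfd S Q (Q.L mu) ≤ gfd S Q (Q.L lam)

/-- Property B: `mu < lam` implies `wfd (∇ mu) ≤ wfd (∇ lam)`. -/
def PropB (Q : QHData S Λ) : Prop :=
  ∀ mu lam : Λ, mu < lam → wfd S Q (Q.costd mu) ≤ wfd S Q (Q.costd lam)

/-- Property C: `wfd (∇ lam) = gfd S - inj (∇ lam)` for all `lam`. -/
def PropC (Q : QHData S Λ) : Prop :=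
  ∀ lam : Λ, wfd S Q (Q.costd lam) = gfdAlg S Q - injdim S (Q.costd lam)

/-- Property D: `wfd (∇ lam) = wfd (L lam)` for all `lam`. -/
def PropD (Q : QHData S Λ) : Prop :=
  ∀ lam : Λ, wfd S Q (Q.costd lam) = wfd S Q (Q.L lam)

/-- Property E: `mu < lam` implies `inj (∇ mu) ≥ inj (∇ lam)`. -/
def PropE (Q : QHData S Λ) : Prop :=
  ∀ mu lam : Λ, mu < lam → injdim S (Q.costd lam) ≤ injdim S (Q.costd mu)

/-- The partial order is minimal for the quasi-hereditary structure: whenever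
`mu < lam` are adjacent, `L mu` is a composition factor of `Δ lam` or of `∇ lam`. -/
def MinimalOrder (Q : QHData S Λ) : Prop :=
  ∀ mu lam : Λ, mu < lam → (¬ ∃ nu, mu < nu ∧ nu < lam) →
    IsCompFactor S (Q.L mu) (Q.std lam) ∨ IsCompFactor S (Q.L mu) (Q.costd lam)

/-- `S` is connected (indecomposable as an algebra, i.e. one block): the only
central idempotents are `0` and `1`. -/
def ConnectedRing : Prop :=
  ∀ c : S, c * c = c → (∀ s : S, c * s = s * c) → c = 0 ∨ c = 1

/-- A tilting module: a module in `F(Δ) ∩ F(∇)`. -/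
def IsTilting (Q : QHData S Λ) (T : ModuleCat.{0} S) : Prop :=
  InStdFilt S Q T ∧ InCostdFilt S Q T

/-- The indecomposable tilting module `T(lam)`: an indecomposable tilting module in
which `L lam` occurs exactly once and all other composition factors `L mu` have
`mu < lam`. -/
def IsIndecTilting (Q : QHData S Λ) (lam : Λ) (T : ModuleCat.{0} S) : Prop :=
  IsTilting S Q T ∧ Nontrivial ↥T ∧
    (∀ A B : Submodule S ↥T, IsCompl A B → A = ⊥ ∨ B = ⊥) ∧
    CompFactorMult S (Q.L lam) T 1 ∧
    ∀ mu, IsCompFactor S (Q.L mu) T → mu = lam ∨ mu < lam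

/-- A full tilting module: a (finite-dimensional) tilting module having every
indecomposable tilting module as a direct summand. -/
def IsFullTilting (Q : QHData S Λ) (T : ModuleCat.{0} S) : Prop :=
  IsTilting S Q T ∧ Module.Finite S ↥T ∧
    ∀ (lam : Λ) (Tl : ModuleCat.{0} S), IsIndecTilting S Q lam Tl →
      ∃ Cc : ModuleCat.{0} S, Nonempty (↥T ≃ₗ[S] (↥Tl × ↥Cc))

/-- The Ringel dual ring `S' = End_S(T)^op`. -/
abbrev RingelDualRing (T : ModuleCat.{0} S) : Type := (Module.End S ↥T)ᵐᵒᵖ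

/-- `Hom_S(T, X)` is a module over `S' = End_S(T)^op` via `f • φ = φ ∘ f`. -/
instance homTModule (T X : ModuleCat.{0} S) :
    Module (RingelDualRing S T) (↥T →ₗ[S] ↥X) where
  smul a φ := φ ∘ₗ a.unop
  one_smul φ := rfl
  mul_smul a b φ := rfl
  smul_zero a := rfl
  smul_add a φ ψ := rfl
  add_smul a b φ := by
    ext x
    show φ ((a.unop + b.unop) x) = φ (a.unop x) + φ (b.unop x)
    rw [LinearMap.add_apply, map_add]
  zero_smul φ := by
    ext x
    show φ ((0 : Module.End S ↥T) x) = 0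
    rw [LinearMap.zero_apply, map_zero]

/-- The `S'`-module `Hom_S(T, X)`, i.e. the image of `X` under the functor
`F = Hom_S(T, -)`. -/
noncomputable def homTMod (T X : ModuleCat.{0} S) :
    ModuleCat.{0} (RingelDualRing S T) :=
  ModuleCat.of (RingelDualRing S T) (↥T →ₗ[S] ↥X)

/-- `Q'` is a Ringel dual quasi-hereditary structure for `(Q, T)`:
`T` is a full tilting module, `Q'` is a quasi-hereditary structure on
`S' = End_S(T)^op` for the opposite poset, and its standard modules are
`Δ'(lam) = Hom_S(T, ∇(lam))`. -/
def IsRingelDualData (Q : QHData S Λ) (T : ModuleCat.{0} S)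
    (Q' : QHData (RingelDualRing S T) Λᵒᵈ) : Prop :=
  IsFullTilting S Q T ∧
    ∀ lam : Λ, Nonempty
      (↥(Q'.std (OrderDual.toDual lam)) ≃ₗ[RingelDualRing S T]
        (↥T →ₗ[S] ↥(Q.costd lam)))

/-- `0 → T_d → ⋯ → T_0 → M → 0` exact with all `T_i` tilting modules. -/
def TiltResLE (Q : QHData S Λ) (M : ModuleCat.{0} S) (d : ℕ) : Prop :=
  ∃ (N : Fin (d + 2) → ModuleCat.{0} S)
    (f : ∀ i : Fin (d + 1), ↥(N i.castSucc) →ₗ[S] ↥(N i.succ)),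
    IsExactSeq S d N f ∧ N (Fin.last (d + 1)) = M ∧
    ∀ i : Fin (d + 1), IsTilting S Q (N i.castSucc)

/-- An idempotent `e` is primitive if it is nonzero and is not the sum of two
nonzero orthogonal idempotents. -/
def IsPrimitiveIdempotent (e : S) : Prop :=
  e * e = e ∧ e ≠ 0 ∧ ∀ a b : S, a * a = a → b * b = b → a * b = 0 → b * a = 0 →
    e = a + b → a = 0 ∨ b = 0

/-- The additive subgroup `e•M = {m | e • m = m}` of `M` (for `e` idempotent). -/
def cornerSet (eG : S) (M : ModuleCat.{0} S) : AddSubgroup ↥M where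
  carrier := {m | eG • m = m}
  add_mem' := by
    intro a b ha hb
    simp only [Set.mem_setOf_eq] at *
    rw [smul_add, ha, hb]
  zero_mem' := by
    simp only [Set.mem_setOf_eq]
    rw [smul_zero]
  neg_mem' := by
    intro a ha
    simp only [Set.mem_setOf_eq] at *
    rw [smul_neg, ha]

/-- The `R`-module structure on `e•M`, where `ι : R → S` identifies `R` with the
corner ring `eSe` (as a non-unital ring, with `ι 1 = e`). -/
def cornerModuleStructure (R : Type) [Ring R] (ι : R →ₙ+* S) (eG : S)
    (hone : ι 1 = eG) (hrange : ∀ r : R, eG * ι r * eG = ι r)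
    (M : ModuleCat.{0} S) : Module R ↥(cornerSet S eG M) where
  smul r m := ⟨ι r • (m : ↥M), by
    have hm : eG • (m : ↥M) = (m : ↥M) := m.2
    show eG • (ι r • (m : ↥M)) = ι r • (m : ↥M)
    have h : eG • (ι r • (m : ↥M)) = (eG * ι r * eG) • (m : ↥M) := by
      rw [mul_assoc, mul_smul, mul_smul, hm]
    rw [h, hrange]⟩
  one_smul m := by
    apply Subtype.ext
    show ι 1 • (m : ↥M) = (m : ↥M)
    rw [hone]
    exact m.2
  mul_smul r s m := by
    apply Subtype.ext
    show ι (r * s) • (m : ↥M) = ι r • (ι s • (m : ↥M))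
    rw [map_mul, mul_smul]
  smul_zero r := by
    apply Subtype.ext
    show ι r • (0 : ↥M) = 0
    rw [smul_zero]
  smul_add r m n := by
    apply Subtype.ext
    show ι r • ((m : ↥M) + (n : ↥M)) = ι r • (m : ↥M) + ι r • (n : ↥M)
    rw [smul_add]
  add_smul r s m := by
    apply Subtype.ext
    show ι (r + s) • (m : ↥M) = ι r • (m : ↥M) + ι s • (m : ↥M)
    rw [map_add, add_smul]
  zero_smul m := by
    apply Subtype.ext
    show ι 0 • (m : ↥M) = 0
    rw [map_zero, zero_smul]

/-- The `R`-module `e•M`, where `R ≅ eSe` via `ι`. -/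
noncomputable def cornerMod (R : Type) [Ring R] (ι : R →ₙ+* S) (eG : S)
    (hone : ι 1 = eG) (hrange : ∀ r : R, eG * ι r * eG = ι r)
    (M : ModuleCat.{0} S) : ModuleCat.{0} R :=
  @ModuleCat.of R _ ↥(cornerSet S eG M) _
    (cornerModuleStructure S R ι eG hone hrange M)

end QHPaper

namespace QHProof

open CategoryTheory QHPaper

section ExtLayer

variable {S : Type} [Ring S]

/-- short exact sequences of modules -/
def SES {A B C : ModuleCat.{0} S} (f : ↥A →ₗ[S] ↥B) (g : ↥B →ₗ[S] ↥C) : Prop :=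
  Function.Injective f ∧ Function.Surjective g ∧ LinearMap.range f = LinearMap.ker g

/-- vanishing of `Ext^i(X, Y)` -/
def V (i : ℕ) (X Y : ModuleCat.{0} S) : Prop :=
  ∀ x : Abelian.Ext X Y i, x = 0

theorem SES.comp {A B C : ModuleCat.{0} S} {f : ↥A →ₗ[S] ↥B} {g : ↥B →ₗ[S] ↥C}
    (h : SES f g) : g ∘ₗ f = 0 := by
  rw [← LinearMap.range_le_ker_iff]; exact h.2.2.le

theorem SES.se {A B C : ModuleCat.{0} S} {f : ↥A →ₗ[S] ↥B} {g : ↥B →ₗ[S] ↥C}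
    (h : SES f g) : (ShortComplex.mk (ModuleCat.ofHom f) (ModuleCat.ofHom g)
      (by rw [← ModuleCat.ofHom_comp, h.comp]; rfl)).ShortExact where
  exact := by
    rw [ShortComplex.moduleCat_exact_iff_range_eq_ker]
    exact h.2.2
  mono_f := (ModuleCat.mono_iff_injective _).2 h.1
  epi_g := (ModuleCat.epi_iff_surjective _).2 h.2.1

variable {A B C : ModuleCat.{0} S} {f : ↥A →ₗ[S] ↥B} {g : ↥B →ₗ[S] ↥C}

theorem V.mid_l (h : SES f g) {i : ℕ} {Y : ModuleCat.{0} S} (h1 : V i A Y) (h3 : V i C Y) :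
    V i B Y := by
  intro x
  obtain ⟨y, hy⟩ := Abelian.Ext.contravariant_sequence_exact₂ h.se Y x (h1 _)
  rw [← hy, h3 y, Abelian.Ext.comp_zero]

theorem V.right_l (h : SES f g) {i : ℕ} {Y : ModuleCat.{0} S} (h1 : V i A Y)
    (h3 : V (i + 1) B Y) : V (i + 1) C Y := by
  intro x
  obtain ⟨y, hy⟩ := Abelian.Ext.contravariant_sequence_exact₃ h.se Y x (h3 _)
    (n₀ := i) (by omega)
  rw [← hy, h1 y, Abelian.Ext.comp_zero]

theorem V.left_l (h : SES f g) {i : ℕ} {Y : ModuleCat.{0} S} (h1 : V i B Y)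
    (h3 : V (i + 1) C Y) : V i A Y := by
  intro x
  obtain ⟨y, hy⟩ := Abelian.Ext.contravariant_sequence_exact₁ h.se Y x
    (n₁ := i + 1) (by omega) (h3 _)
  rw [← hy, h1 y, Abelian.Ext.comp_zero]

theorem V.mid_r (h : SES f g) {i : ℕ} {X : ModuleCat.{0} S} (h1 : V i X A) (h3 : V i X C) :
    V i X B := by
  intro x
  obtain ⟨y, hy⟩ := Abelian.Ext.covariant_sequence_exact₂ X h.se x (h3 _)
  rw [← hy, h1 y, Abelian.Ext.zero_comp]

theorem V.left_r (h : SES f g) {i : ℕ} {X : ModuleCat.{0} S} (h1 : V i X C)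
    (h3 : V (i + 1) X B) : V (i + 1) X A := by
  intro x
  obtain ⟨y, hy⟩ := Abelian.Ext.covariant_sequence_exact₁ X h.se x (h3 _) (n₀ := i) rfl
  rw [← hy, h1 y, Abelian.Ext.zero_comp]

theorem V.right_r (h : SES f g) {i : ℕ} {X : ModuleCat.{0} S} (h1 : V i X B)
    (h3 : V (i + 1) X A) : V i X C := by
  intro x
  obtain ⟨y, hy⟩ := Abelian.Ext.covariant_sequence_exact₃ X h.se x (n₁ := i + 1) rfl (h3 _)
  rw [← hy, h1 y, Abelian.Ext.zero_comp]

theorem V_zero_iff {X Y : ModuleCat.{0} S} : V 0 X Y ↔ ∀ f : ↥X →ₗ[S] ↥Y, f = 0 := by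
  constructor
  · intro h f
    have := (Abelian.Ext.mk₀_eq_zero_iff _).1 (h (Abelian.Ext.mk₀ (ModuleCat.ofHom f)))
    exact congrArg ModuleCat.Hom.hom this
  · intro h x
    obtain ⟨g, rfl⟩ := (Abelian.Ext.mk₀_bijective X Y).2 x
    rw [Abelian.Ext.mk₀_eq_zero_iff]
    ext1
    exact h _

theorem V_one_lift (h : SES f g) {X : ModuleCat.{0} S} (h1 : V 1 X A) (u : ↥X →ₗ[S] ↥C) :
    ∃ v : ↥X →ₗ[S] ↥B, g ∘ₗ v = u := by
  obtain ⟨y, hy⟩ := Abelian.Ext.covariant_sequence_exact₃ X h.se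
    (Abelian.Ext.mk₀ (ModuleCat.ofHom u)) (n₁ := 1) rfl (h1 _)
  obtain ⟨v, rfl⟩ := (Abelian.Ext.mk₀_bijective X B).2 y
  rw [Abelian.Ext.mk₀_comp_mk₀] at hy
  have := (Abelian.Ext.mk₀_bijective _ _).1 hy
  exact ⟨v.hom, congrArg ModuleCat.Hom.hom this⟩

theorem V_one_ext (h : SES f g) {Y : ModuleCat.{0} S} (h1 : V 1 C Y) (u : ↥A →ₗ[S] ↥Y) :
    ∃ v : ↥B →ₗ[S] ↥Y, v ∘ₗ f = u := by
  obtain ⟨y, hy⟩ := Abelian.Ext.contravariant_sequence_exact₁ h.se Y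
    (Abelian.Ext.mk₀ (ModuleCat.ofHom u)) (n₁ := 1) rfl (h1 _)
  obtain ⟨v, rfl⟩ := (Abelian.Ext.mk₀_bijective B Y).2 y
  rw [Abelian.Ext.mk₀_comp_mk₀] at hy
  have := (Abelian.Ext.mk₀_bijective _ _).1 hy
  exact ⟨v.hom, congrArg ModuleCat.Hom.hom this⟩

theorem V_proj {P Y : ModuleCat.{0} S} (hP : Module.Projective S ↥P) (i : ℕ) :
    V (i + 1) P Y := by
  intro x
  have : Projective P := (IsProjective.iff_projective (R := S) ↥P).1 hP
  exact Abelian.Ext.eq_zero_of_projective x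

theorem V_inj {X I : ModuleCat.{0} S} (hI : Module.Injective S ↥I) (i : ℕ) :
    V (i + 1) X I := by
  intro x
  have : Injective I := Module.injective_object_of_injective_module S ↥I
  exact Abelian.Ext.eq_zero_of_injective x

theorem V_subsing_l {X Y : ModuleCat.{0} S} [Subsingleton ↥X] (i : ℕ) : V i X Y := by
  cases i with
  | zero =>
    rw [V_zero_iff]; intro f; ext x; rw [Subsingleton.elim x 0]; simp
  | succ i => exact V_proj ⟨⟨0, fun x => Subsingleton.elim _ _⟩⟩ i

theorem V_subsing_r {X Y : ModuleCat.{0} S} [Subsingleton ↥Y] (i : ℕ) : V i X Y := by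
  cases i with
  | zero =>
    rw [V_zero_iff]; intro f; ext x; exact Subsingleton.elim _ _
  | succ i =>
    refine V_inj ⟨fun X Y _ _ _ _ f hf g => ⟨0, fun x => Subsingleton.elim _ _⟩⟩ i

/-- the sequence `N → M → M/N` -/
theorem ses_quot {M : Type} [AddCommGroup M] [Module S M] (N : Submodule S M) :
    SES (A := ModuleCat.of S N) (B := ModuleCat.of S M) (C := ModuleCat.of S (M ⧸ N))
      N.subtype N.mkQ := by
  refine ⟨N.injective_subtype, N.mkQ_surjective, ?_⟩
  simp

theorem ses_ker {B C : ModuleCat.{0} S} (g : ↥B →ₗ[S] ↥C) (hg : Function.Surjective g) :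
    SES (A := ModuleCat.of S (LinearMap.ker g)) (LinearMap.ker g).subtype g := by
  refine ⟨Submodule.injective_subtype _, hg, ?_⟩
  simp

theorem ses_coker {A B : ModuleCat.{0} S} (f : ↥A →ₗ[S] ↥B) (hf : Function.Injective f) :
    SES (C := ModuleCat.of S (↥B ⧸ LinearMap.range f)) f (LinearMap.range f).mkQ := by
  refine ⟨hf, Submodule.mkQ_surjective _, ?_⟩
  simp

theorem ses_iso_l (A B : ModuleCat.{0} S) (e : ↥A ≃ₗ[S] ↥B) :
    SES (C := ModuleCat.of S PUnit) e.toLinearMap 0 := by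
  refine ⟨e.injective, fun x => ⟨0, rfl⟩, ?_⟩
  rw [LinearMap.ker_zero]; exact LinearEquiv.range e

theorem ses_iso_r (A B : ModuleCat.{0} S) (e : ↥A ≃ₗ[S] ↥B) :
    SES (A := ModuleCat.of S PUnit) 0 e.toLinearMap := by
  refine ⟨fun x y _ => rfl, e.surjective, ?_⟩
  rw [LinearMap.range_zero]; exact (LinearEquiv.ker e).symm

theorem V.iso_l {A B : ModuleCat.{0} S} (e : ↥A ≃ₗ[S] ↥B) {i : ℕ} {Y : ModuleCat.{0} S}
    (h : V i A Y) : V i B Y :=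
  V.mid_l (ses_iso_l A B e) h (V_subsing_l i)

theorem V.iso_r {A B : ModuleCat.{0} S} (e : ↥A ≃ₗ[S] ↥B) {i : ℕ} {X : ModuleCat.{0} S}
    (h : V i X A) : V i X B :=
  V.mid_r (ses_iso_l A B e) h (V_subsing_r i)

end ExtLayer

end QHProof

namespace QHProof

open CategoryTheory QHPaper

section Res

variable {S : Type} [Ring S]

/-- exact sequence `0 → A → X₁ → ⋯ → X_n → M → 0` with middle terms in `CC` -/
def ResE (CC : ModuleCat.{0} S → Prop) : ℕ → ModuleCat.{0} S → ModuleCat.{0} S → Prop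
  | 0, A, M => Nonempty (↥A ≃ₗ[S] ↥M)
  | n + 1, A, M => ∃ (X B : ModuleCat.{0} S) (i : ↥A →ₗ[S] ↥X) (q : ↥X →ₗ[S] ↥B),
      CC X ∧ SES i q ∧ ResE CC n B M

/-- left resolutions, recursively -/
def LR (CC : ModuleCat.{0} S → Prop) : ℕ → ModuleCat.{0} S → Prop
  | 0, M => CC M
  | n + 1, M => ∃ (X K : ModuleCat.{0} S) (i : ↥K →ₗ[S] ↥X) (q : ↥X →ₗ[S] ↥M),
      CC X ∧ SES i q ∧ LR CC n K

/-- right resolutions, recursively -/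
def RR (CC : ModuleCat.{0} S → Prop) : ℕ → ModuleCat.{0} S → Prop
  | 0, M => CC M
  | n + 1, M => ∃ (X C : ModuleCat.{0} S) (i : ↥M →ₗ[S] ↥X) (q : ↥X →ₗ[S] ↥C),
      CC X ∧ SES i q ∧ RR CC n C

/-- closed under isomorphism -/
def IsoCl (CC : ModuleCat.{0} S → Prop) : Prop :=
  ∀ A B : ModuleCat.{0} S, Nonempty (↥A ≃ₗ[S] ↥B) → CC A → CC B

theorem SES.iso_left {A A' B C : ModuleCat.{0} S} {f : ↥A →ₗ[S] ↥B} {g : ↥B →ₗ[S] ↥C}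
    (h : SES f g) (e : ↥A' ≃ₗ[S] ↥A) : SES (f ∘ₗ e.toLinearMap) g := by
  refine ⟨h.1.comp e.injective, h.2.1, ?_⟩
  rw [LinearMap.range_comp_of_range_eq_top _ (LinearEquiv.range e)]; exact h.2.2

theorem SES.iso_right {A B C C' : ModuleCat.{0} S} {f : ↥A →ₗ[S] ↥B} {g : ↥B →ₗ[S] ↥C}
    (h : SES f g) (e : ↥C ≃ₗ[S] ↥C') : SES f (e.toLinearMap ∘ₗ g) := by
  refine ⟨h.1, e.surjective.comp h.2.1, ?_⟩
  rw [LinearMap.ker_comp_of_ker_eq_bot _ (LinearEquiv.ker e)]; exact h.2.2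

theorem SES.quotEquiv {A B C : ModuleCat.{0} S} {f : ↥A →ₗ[S] ↥B} {g : ↥B →ₗ[S] ↥C}
    (h : SES f g) : Nonempty ((↥B ⧸ LinearMap.range f) ≃ₗ[S] ↥C) :=
  ⟨(Submodule.quotEquivOfEq _ _ h.2.2).trans (g.quotKerEquivOfSurjective h.2.1)⟩

theorem RR.iso {CC : ModuleCat.{0} S → Prop} (hC : IsoCl CC) (n : ℕ) : IsoCl (RR CC n) := by
  rintro A B ⟨e⟩ h
  cases n with
  | zero => exact hC A B ⟨e⟩ h
  | succ n =>
    obtain ⟨X, C, i, q, hX, hs, hr⟩ := h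
    exact ⟨X, C, _, q, hX, hs.iso_left e.symm, hr⟩

theorem LR.iso {CC : ModuleCat.{0} S → Prop} (hC : IsoCl CC) (n : ℕ) : IsoCl (LR CC n) := by
  rintro A B ⟨e⟩ h
  cases n with
  | zero => exact hC A B ⟨e⟩ h
  | succ n =>
    obtain ⟨X, C, i, q, hX, hs, hr⟩ := h
    exact ⟨X, C, i, _, hX, hs.iso_right e, hr⟩

theorem ResE.snoc {CC : ModuleCat.{0} S → Prop} {X K M : ModuleCat.{0} S}
    {i : ↥K →ₗ[S] ↥X} {q : ↥X →ₗ[S] ↥M} (hX : CC X) (hs : SES i q) (n : ℕ) :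
    ∀ A : ModuleCat.{0} S, ResE CC n A K → ResE CC (n + 1) A M := by
  induction n with
  | zero =>
    rintro A ⟨e⟩
    exact ⟨X, M, _, q, hX, hs.iso_left e, ⟨LinearEquiv.refl S _⟩⟩
  | succ n ih =>
    rintro A ⟨Y, B, j, p, hY, ht, hr⟩
    exact ⟨Y, B, j, p, hY, ht, ih B hr⟩

theorem LR.toResE {CC : ModuleCat.{0} S → Prop} (n : ℕ) :
    ∀ M : ModuleCat.{0} S, LR CC n M → ∃ A, CC A ∧ ResE CC n A M := by
  induction n with
  | zero => intro M h; exact ⟨M, h, ⟨LinearEquiv.refl S _⟩⟩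
  | succ n ih =>
    rintro M ⟨X, K, i, q, hX, hs, hr⟩
    obtain ⟨A, hA, hE⟩ := ih K hr
    exact ⟨A, hA, hE.snoc hX hs n⟩

theorem RR.toResE {CC : ModuleCat.{0} S → Prop} (n : ℕ) :
    ∀ M : ModuleCat.{0} S, RR CC n M → ∃ C, CC C ∧ ResE CC n M C := by
  induction n with
  | zero => intro M h; exact ⟨M, h, ⟨LinearEquiv.refl S _⟩⟩
  | succ n ih =>
    rintro M ⟨X, K, i, q, hX, hs, hr⟩
    obtain ⟨C, hC, hE⟩ := ih K hr
    exact ⟨C, hC, X, K, i, q, hX, hs, hE⟩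

/-- objects of the two-step sequence -/
def consN (A X : ModuleCat.{0} S) (N : ℕ → ModuleCat.{0} S) : ℕ → ModuleCat.{0} S
  | 0 => A
  | 1 => X
  | i + 2 => N (i + 1)

/-- maps of the two-step sequence -/
def consF (A X : ModuleCat.{0} S) (N : ℕ → ModuleCat.{0} S)
    (f : ∀ i, ↥(N i) →ₗ[S] ↥(N (i + 1))) (a : ↥A →ₗ[S] ↥X) (q : ↥X →ₗ[S] ↥(N 0)) :
    ∀ i, ↥(consN A X N i) →ₗ[S] ↥(consN A X N (i + 1))
  | 0 => a
  | 1 => f 0 ∘ₗ q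
  | i + 2 => f (i + 1)

theorem ResE.seq {CC : ModuleCat.{0} S → Prop} (n : ℕ) :
    ∀ A M : ModuleCat.{0} S, ResE CC n A M →
      ∃ (N : ℕ → ModuleCat.{0} S) (f : ∀ i, ↥(N i) →ₗ[S] ↥(N (i + 1))),
        N 0 = A ∧ N (n + 1) = M ∧ Function.Injective (f 0) ∧ Function.Surjective (f n) ∧
        (∀ i < n, LinearMap.range (f i) = LinearMap.ker (f (i + 1))) ∧
        ∀ i < n, CC (N (i + 1)) := by
  induction n with
  | zero =>
    rintro A M ⟨e⟩
    refine ⟨consN A M (fun _ => M), consF A M (fun _ => M) (fun _ => LinearMap.id)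
      e.toLinearMap LinearMap.id, rfl, rfl, e.injective, e.surjective, ?_, ?_⟩ <;>
    · intro i hi; omega
  | succ n ih =>
    rintro A M ⟨X, B, a, q, hX, hs, hr⟩
    obtain ⟨N, f, hN, hM, hinj, hsurj, hex, hcc⟩ := ih B M hr
    subst hN
    refine ⟨consN A X N, consF A X N f a q, rfl, hM, hs.1, ?_, ?_, ?_⟩
    · cases n with
      | zero => exact hsurj.comp hs.2.1
      | succ n => exact hsurj
    · intro i hi
      match i with
      | 0 =>
        show LinearMap.range a = LinearMap.ker (f 0 ∘ₗ q)
        rw [LinearMap.ker_comp_of_ker_eq_bot _ (LinearMap.ker_eq_bot.2 hinj)]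
        exact hs.2.2
      | 1 =>
        show LinearMap.range (f 0 ∘ₗ q) = LinearMap.ker (f 1)
        rw [LinearMap.range_comp_of_range_eq_top _ (LinearMap.range_eq_top.2 hs.2.1)]
        exact hex 0 (by omega)
      | i + 2 => exact hex (i + 1) (by omega)
    · intro i hi
      match i with
      | 0 => exact hX
      | i + 1 => exact hcc i (by omega)

theorem RR.toFin {CC : ModuleCat.{0} S → Prop} {n : ℕ} {M : ModuleCat.{0} S}
    (h : RR CC n M) : ∃ (N : Fin (n + 2) → ModuleCat.{0} S)
    (f : ∀ i : Fin (n + 1), ↥(N i.castSucc) →ₗ[S] ↥(N i.succ)),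
    IsExactSeq S n N f ∧ N 0 = M ∧ ∀ i : Fin (n + 1), CC (N i.succ) := by
  obtain ⟨C, hC, hE⟩ := h.toResE
  obtain ⟨N, f, hN, hM, hinj, hsurj, hex, hcc⟩ := hE.seq
  refine ⟨fun i => N i.val, fun i => f i.val, ⟨hinj, hsurj, fun i => hex i.val i.2⟩, hN, ?_⟩
  intro i
  rcases Nat.lt_or_ge i.val n with hi | hi
  · exact hcc i.val hi
  · have : i.val = n := by omega
    show CC (N (i.val + 1))
    rw [this, hM]; exact hC

theorem LR.toFin {CC : ModuleCat.{0} S → Prop} {n : ℕ} {M : ModuleCat.{0} S}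
    (h : LR CC n M) : ∃ (N : Fin (n + 2) → ModuleCat.{0} S)
    (f : ∀ i : Fin (n + 1), ↥(N i.castSucc) →ₗ[S] ↥(N i.succ)),
    IsExactSeq S n N f ∧ N (Fin.last (n + 1)) = M ∧
      ∀ i : Fin (n + 1), CC (N i.castSucc) := by
  obtain ⟨A, hA, hE⟩ := h.toResE
  obtain ⟨N, f, hN, hM, hinj, hsurj, hex, hcc⟩ := hE.seq
  refine ⟨fun i => N i.val, fun i => f i.val, ⟨hinj, hsurj, fun i => hex i.val i.2⟩, hM, ?_⟩
  rintro ⟨i, hi⟩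
  show CC (N i)
  cases i with
  | zero => rw [hN]; exact hA
  | succ i => exact hcc i (by omega)

theorem LR.ofFin {CC : ModuleCat.{0} S → Prop} (hC : IsoCl CC) {n : ℕ} {M : ModuleCat.{0} S}
    (h : ∃ (N : Fin (n + 2) → ModuleCat.{0} S)
    (f : ∀ i : Fin (n + 1), ↥(N i.castSucc) →ₗ[S] ↥(N i.succ)),
    IsExactSeq S n N f ∧ N (Fin.last (n + 1)) = M ∧
      ∀ i : Fin (n + 1), CC (N i.castSucc)) : LR CC n M := by
  obtain ⟨N, f, ⟨hinj, hsurj, hex⟩, rfl, hcc⟩ := h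
  have key : ∀ (j : ℕ) (hj : j < n + 1),
      LR CC j (ModuleCat.of S (LinearMap.range (f ⟨j, hj⟩))) := by
    intro j
    induction j with
    | zero =>
      intro hj
      exact hC _ _ ⟨LinearEquiv.ofInjective (f 0) hinj⟩ (hcc 0)
    | succ j ih =>
      intro hj
      have h1 := ih (by omega)
      have h2 := hex ⟨j, by omega⟩
      refine ⟨N (Fin.castSucc ⟨j + 1, hj⟩), ModuleCat.of S (LinearMap.ker (f ⟨j + 1, hj⟩)),
        Submodule.subtype _, (f ⟨j + 1, hj⟩).rangeRestrict, hcc _, ?_, ?_⟩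
      · have := ses_ker (C := ModuleCat.of S (LinearMap.range (f ⟨j + 1, hj⟩)))
          (f ⟨j + 1, hj⟩).rangeRestrict (LinearMap.surjective_rangeRestrict _)
        refine ⟨Submodule.injective_subtype _, this.2.1, ?_⟩
        simp
      · refine LR.iso hC j _ _ ⟨?_⟩ h1
        exact LinearEquiv.ofEq _ _ h2
  refine LR.iso hC n _ _ ⟨?_⟩ (key n (by omega))
  exact (LinearEquiv.ofEq _ _ (LinearMap.range_eq_top.2 hsurj)).trans Submodule.topEquiv

theorem RR.ofFin {CC : ModuleCat.{0} S → Prop} (hC : IsoCl CC) {n : ℕ} {M : ModuleCat.{0} S}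
    (h : ∃ (N : Fin (n + 2) → ModuleCat.{0} S)
    (f : ∀ i : Fin (n + 1), ↥(N i.castSucc) →ₗ[S] ↥(N i.succ)),
    IsExactSeq S n N f ∧ N 0 = M ∧ ∀ i : Fin (n + 1), CC (N i.succ)) : RR CC n M := by
  obtain ⟨N, f, ⟨hinj, hsurj, hex⟩, rfl, hcc⟩ := h
  have key : ∀ (m j : ℕ) (hj : j < n + 1), j + m = n →
      RR CC m (ModuleCat.of S (LinearMap.range (f ⟨j, hj⟩))) := by
    intro m
    induction m with
    | zero =>
      intro j hj hjm
      obtain rfl : j = n := by omega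
      refine hC (N (Fin.last j).succ) _ ⟨?_⟩ (hcc (Fin.last j))
      exact ((LinearEquiv.ofEq _ _ (LinearMap.range_eq_top.2 hsurj)).trans
        Submodule.topEquiv).symm
    | succ m ih =>
      intro j hj hjm
      have h1 := ih (j + 1) (by omega) (by omega)
      have h2 := hex ⟨j, by omega⟩
      refine ⟨N (Fin.succ ⟨j, hj⟩), ModuleCat.of S (LinearMap.range (f ⟨j + 1, by omega⟩)),
        Submodule.subtype _, (f ⟨j + 1, by omega⟩).rangeRestrict, hcc _, ?_, h1⟩
      refine ⟨Submodule.injective_subtype _, LinearMap.surjective_rangeRestrict _, ?_⟩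
      rw [LinearMap.ker_rangeRestrict]
      erw [Submodule.range_subtype]
      exact h2
  refine RR.iso hC n _ _ ⟨?_⟩ (key n 0 (by omega) (by omega))
  exact (LinearEquiv.ofInjective (f 0) hinj).symm

/-- extension closure of a class of modules -/
inductive Filt (DD : ModuleCat.{0} S → Prop) : ModuleCat.{0} S → Prop
  | zero (M : ModuleCat.{0} S) (h : Subsingleton ↥M) : Filt DD M
  | base (M : ModuleCat.{0} S) (h : DD M) : Filt DD M
  | ext {A B C : ModuleCat.{0} S} (f : ↥A →ₗ[S] ↥B) (g : ↥B →ₗ[S] ↥C) (h : SES f g)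
      (hA : Filt DD A) (hC : Filt DD C) : Filt DD B

theorem Filt.iso (DD : ModuleCat.{0} S → Prop) : IsoCl (Filt DD) := by
  rintro A B ⟨e⟩ h
  exact Filt.ext _ _ (ses_iso_l A B e) h (Filt.zero _ (inferInstanceAs (Subsingleton PUnit)))

theorem ses_subquot {M : ModuleCat.{0} S} (A B : Submodule S ↥M) (h : A ≤ B) :
    SES (A := ModuleCat.of S A) (B := ModuleCat.of S B) (C := ModuleCat.of S (subquot S A B))
      (Submodule.inclusion h) (Submodule.mkQ _) := by
  refine ⟨Submodule.inclusion_injective h, Submodule.mkQ_surjective _, ?_⟩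
  rw [Submodule.ker_mkQ]
  exact Submodule.range_inclusion A B h

theorem filt_of_chain {DD : ModuleCat.{0} S → Prop} {M : ModuleCat.{0} S} {n : ℕ}
    (f : Fin (n + 1) → Submodule S ↥M) (hm : Monotone f) (h0 : f 0 = ⊥) (j : ℕ) :
    ∀ (hj : j < n + 1), (∀ i : Fin n, i.val < j →
      DD (ModuleCat.of S (subquot S (f i.castSucc) (f i.succ)))) →
    Filt DD (ModuleCat.of S (f ⟨j, hj⟩)) := by
  induction j with
  | zero =>
    intro hj _
    refine Filt.zero _ ?_
    have : f ⟨0, hj⟩ = ⊥ := h0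
    show Subsingleton (f ⟨0, hj⟩)
    rw [this]; infer_instance
  | succ j ih =>
    intro hj h
    have hle : f (Fin.castSucc ⟨j, by omega⟩) ≤ f (Fin.succ ⟨j, by omega⟩) :=
      hm (Fin.castSucc_le_succ _)
    refine Filt.ext _ _ (ses_subquot _ _ hle) (ih (by omega) fun i hi => h i (by omega))
      (Filt.base _ (h ⟨j, by omega⟩ (by simp)))

/-- chains with sections in `DD` -/
def HasChain (DD : ModuleCat.{0} S → Prop) (M : ModuleCat.{0} S) : Prop :=
  ∃ (n : ℕ) (f : ℕ → Submodule S ↥M), Monotone f ∧ f 0 = ⊥ ∧ f n = ⊤ ∧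
    ∀ i < n, DD (ModuleCat.of S (subquot S (f i) (f (i + 1))))

theorem map_subquot {A M : ModuleCat.{0} S} (i : ↥A →ₗ[S] ↥M) (hi : Function.Injective i)
    (X Y : Submodule S ↥A) (hXY : X ≤ Y) :
    Nonempty (subquot S X Y ≃ₗ[S] subquot S (X.map i) (Y.map i)) := by
  refine ⟨Submodule.Quotient.equiv _ _ (Submodule.equivMapOfInjective i hi Y) ?_⟩
  ext ⟨z, hz⟩
  simp only [Submodule.mem_map, Submodule.mem_comap, Submodule.subtype_apply]
  constructor
  · rintro ⟨y, hy, h⟩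
    refine ⟨y, hy, ?_⟩
    have := congrArg Subtype.val h
    simpa using this
  · rintro ⟨y, hy, h⟩
    refine ⟨⟨y, hXY hy⟩, hy, ?_⟩
    apply Subtype.ext
    simpa using h

theorem HasChain.snoc {DD : ModuleCat.{0} S → Prop} (hD : IsoCl DD) {A B C : ModuleCat.{0} S}
    {f : ↥A →ₗ[S] ↥B} {g : ↥B →ₗ[S] ↥C} (h : SES f g) (hA : HasChain DD A) (hC : DD C) :
    HasChain DD B := by
  obtain ⟨n, c, hm, h0, hn, hs⟩ := hA
  refine ⟨n + 1, fun i => if i ≤ n then (c i).map f else ⊤, ?_, ?_, ?_, ?_⟩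
  · intro i j hij
    by_cases hj : j ≤ n
    · have : i ≤ n := hij.trans hj
      simp only [hj, this, if_true]
      exact Submodule.map_mono (hm hij)
    · simp [hj]
  · simp [h0]
  · simp
  · intro i hi
    have aux : ∀ X Y X' Y' : Submodule S ↥B, X' = X → Y' = Y →
        DD (ModuleCat.of S (subquot S X Y)) → DD (ModuleCat.of S (subquot S X' Y')) := by
      rintro X Y _ _ rfl rfl hh
      exact hh
    by_cases hin : i < n
    · refine aux _ _ _ _ (if_pos hin.le) (if_pos (Nat.succ_le_of_lt hin)) ?_
      exact hD _ _ (map_subquot f h.1 _ _ (hm (Nat.le_succ i))) (hs i hin)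
    · obtain rfl : i = n := by omega
      refine aux (LinearMap.range f) ⊤ _ _ ?_ (if_neg (by omega)) ?_
      · simp [hn]
      refine hD _ _ ⟨LinearEquiv.symm ?_⟩ hC
      refine (Submodule.Quotient.equiv _ (LinearMap.range f) Submodule.topEquiv ?_).trans
        h.quotEquiv.some
      ext z
      simp

theorem Filt.chain_ext {DD : ModuleCat.{0} S → Prop} (hD : IsoCl DD) {C : ModuleCat.{0} S}
    (hC : Filt DD C) : ∀ {A B : ModuleCat.{0} S} (f : ↥A →ₗ[S] ↥B) (g : ↥B →ₗ[S] ↥C),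
    SES f g → HasChain DD A → HasChain DD B := by
  induction hC with
  | zero C hsub =>
    intro A B f g h hA
    obtain ⟨n, c, hm, h0, hn, hs⟩ := hA
    refine ⟨n, fun i => (c i).map f, fun i j hij => Submodule.map_mono (hm hij), ?_, ?_, ?_⟩
    · simp [h0]
    · simp only [hn, Submodule.map_top, h.2.2]
      rw [LinearMap.ker_eq_top]; ext x; exact Subsingleton.elim _ _
    · intro i hi
      exact hD _ _ (map_subquot f h.1 _ _ (hm (Nat.le_succ i))) (hs i hi)
  | base C hC =>
    intro A B f g h hA
    exact hA.snoc hD h hC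
  | @ext C1 C C2 a b hab h1 h2 ih1 ih2 =>
    intro A B f g h hA
    have hle : LinearMap.range f ≤ (LinearMap.range a).comap g := by
      rw [h.2.2]; intro x hx
      have : g x = 0 := hx
      simp [this]
    -- the pullback
    let B1 : Submodule S ↥B := (LinearMap.range a).comap g
    have hB1 : ∀ x : B1, g x ∈ LinearMap.range a := fun x => x.2
    let g1 : B1 →ₗ[S] ↥C1 := (LinearEquiv.ofInjective a hab.1).symm.toLinearMap ∘ₗ
      LinearMap.codRestrict (LinearMap.range a) (g ∘ₗ B1.subtype) hB1
    let f1 : ↥A →ₗ[S] B1 := LinearMap.codRestrict B1 f (fun x => hle ⟨x, rfl⟩)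
    have hg1 : ∀ x : B1, a (g1 x) = g x := by
      intro x
      have := LinearEquiv.apply_symm_apply (LinearEquiv.ofInjective a hab.1)
        (LinearMap.codRestrict (LinearMap.range a) (g ∘ₗ B1.subtype) hB1 x)
      exact congrArg Subtype.val this
    have hs1 : SES (B := ModuleCat.of S B1) f1 g1 := by
      refine ⟨?_, ?_, ?_⟩
      · intro x y hxy
        exact h.1 (congrArg Subtype.val hxy)
      · intro c
        obtain ⟨b', hb⟩ := h.2.1 (a c)
        refine ⟨⟨b', ?_⟩, ?_⟩
        · show g b' ∈ LinearMap.range a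
          rw [hb]; exact ⟨c, rfl⟩
        · apply hab.1
          rw [hg1]; exact hb
      · ext ⟨x, hx⟩
        rw [LinearMap.mem_ker, LinearMap.mem_range]
        constructor
        · rintro ⟨y, hy⟩
          have hy' : f y = x := congrArg Subtype.val hy
          apply hab.1
          rw [hg1, map_zero]
          have : f y ∈ LinearMap.ker g := by rw [← h.2.2]; exact ⟨y, rfl⟩
          show g x = 0
          rw [← hy']; exact this
        · intro hx0
          have h5 := hg1 ⟨x, hx⟩
          rw [hx0, map_zero] at h5
          have : x ∈ LinearMap.range f := by rw [h.2.2]; exact h5.symm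
          obtain ⟨y, hy⟩ := this
          exact ⟨y, Subtype.ext hy⟩
    have hc1 := ih1 (B := ModuleCat.of S B1) f1 g1 hs1 hA
    have hs2 : SES (A := ModuleCat.of S B1) B1.subtype (b ∘ₗ g) := by
      refine ⟨B1.injective_subtype, hab.2.1.comp h.2.1, ?_⟩
      rw [LinearMap.ker_comp, ← hab.2.2]
      exact Submodule.range_subtype _
    exact ih2 _ _ hs2 hc1

/-- isomorphic to some member of the family -/
def IsD {Λ : Type} (D : Λ → ModuleCat.{0} S) (M : ModuleCat.{0} S) : Prop :=
  ∃ lam, Nonempty (↥M ≃ₗ[S] ↥(D lam))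

theorem IsD.iso {Λ : Type} (D : Λ → ModuleCat.{0} S) : IsoCl (IsD D) := by
  rintro A B ⟨e⟩ ⟨lam, ⟨e'⟩⟩
  exact ⟨lam, ⟨e.symm.trans e'⟩⟩

theorem filt_iff {Λ : Type} (D : Λ → ModuleCat.{0} S) (M : ModuleCat.{0} S) :
    (∃ (n : ℕ) (f : Fin (n + 1) → Submodule S ↥M) (g : Fin n → Λ),
      HasFiltrationWithSections S M n f (fun i => D (g i))) ↔ Filt (IsD D) M := by
  constructor
  · rintro ⟨n, f, g, hm, h0, hn, hs⟩
    have := filt_of_chain (DD := IsD D) f hm h0 n (by omega) (fun i _ => ⟨g i, hs i⟩)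
    refine Filt.iso _ _ _ ⟨?_⟩ this
    exact (LinearEquiv.ofEq _ _ hn).trans Submodule.topEquiv
  · intro h
    have hz : HasChain (IsD D) (ModuleCat.of S PUnit) := by
      refine ⟨0, fun _ => ⊥, fun _ _ _ => le_rfl, rfl, ?_, by simp⟩
      exact Subsingleton.elim _ _
    obtain ⟨n, c, hm, h0, hn, hs⟩ :=
      h.chain_ext (IsD.iso D) _ _ (ses_iso_r M M (LinearEquiv.refl S _)) hz
    choose g hg using fun i : Fin n => hs i.val i.2
    exact ⟨n, fun i => c i.val, g, fun i j hij => hm hij, h0, hn, hg⟩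

end Res

end QHProof

namespace QHProof

open CategoryTheory QHPaper

section QHbasic

variable {S : Type} [Ring S] {Λ : Type} [Fintype Λ] [PartialOrder Λ] (Q : QHData S Λ)

/-- `L mu` is a composition factor of `M`, expressed through `P mu` -/
def Fac (mu : Λ) (M : ModuleCat.{0} S) : Prop := ∃ f : ↥(Q.P mu) →ₗ[S] ↥M, f ≠ 0

theorem SES.factor {A B C X : ModuleCat.{0} S} {f : ↥A →ₗ[S] ↥B} {g : ↥B →ₗ[S] ↥C}
    (h : SES f g) (u : ↥X →ₗ[S] ↥B) (hu : g ∘ₗ u = 0) : ∃ v : ↥X →ₗ[S] ↥A, f ∘ₗ v = u := by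
  have hm : ∀ x, u x ∈ LinearMap.range f := by
    intro x; rw [h.2.2]; exact LinearMap.congr_fun hu x
  refine ⟨(LinearEquiv.ofInjective f h.1).symm.toLinearMap ∘ₗ
    LinearMap.codRestrict (LinearMap.range f) u hm, ?_⟩
  ext x
  have := LinearEquiv.apply_symm_apply (LinearEquiv.ofInjective f h.1)
    (LinearMap.codRestrict (LinearMap.range f) u hm x)
  exact congrArg Subtype.val this

/-- factoring through a surjection -/
theorem factor_surj {B C X : Type} [AddCommGroup B] [Module S B] [AddCommGroup C] [Module S C]
    [AddCommGroup X] [Module S X] (g : B →ₗ[S] C)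
    (hg : Function.Surjective g) (u : B →ₗ[S] X)
    (hu : LinearMap.ker g ≤ LinearMap.ker u) : ∃ v : C →ₗ[S] X, v ∘ₗ g = u := by
  refine ⟨(LinearMap.ker g).liftQ u hu ∘ₗ (g.quotKerEquivOfSurjective hg).symm.toLinearMap, ?_⟩
  ext x
  have : (g.quotKerEquivOfSurjective hg).symm (g x) = (LinearMap.ker g).mkQ x := by
    rw [LinearEquiv.symm_apply_eq]; rfl
  simp [this]

theorem fac_mid {A B C : ModuleCat.{0} S} {f : ↥A →ₗ[S] ↥B} {g : ↥B →ₗ[S] ↥C}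
    (h : SES f g) {mu : Λ} (hB : Fac Q mu B) : Fac Q mu A ∨ Fac Q mu C := by
  obtain ⟨u, hu⟩ := hB
  by_cases hg : g ∘ₗ u = 0
  · obtain ⟨v, rfl⟩ := h.factor u hg
    left
    exact ⟨v, fun hv => hu (by rw [hv, LinearMap.comp_zero])⟩
  · exact Or.inr ⟨_, hg⟩

theorem fac_sub {A B : ModuleCat.{0} S} {f : ↥A →ₗ[S] ↥B} (h : Function.Injective f)
    {mu : Λ} (hA : Fac Q mu A) : Fac Q mu B := by
  obtain ⟨u, hu⟩ := hA
  refine ⟨f ∘ₗ u, fun hz => hu ?_⟩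
  ext x
  apply h
  rw [map_zero_eq_zero_apply f]
  exact LinearMap.congr_fun hz x
where map_zero_eq_zero_apply {A B : ModuleCat.{0} S} (f : ↥A →ₗ[S] ↥B) {Y : Type}
    [AddCommGroup Y] [Module S Y] {y : Y} : f ((0 : Y →ₗ[S] ↥A) y) = 0 := by simp

theorem fac_quot {A B : ModuleCat.{0} S} {f : ↥A →ₗ[S] ↥B} (h : Function.Surjective f)
    {mu : Λ} (hB : Fac Q mu B) : Fac Q mu A := by
  obtain ⟨u, hu⟩ := hB
  haveI := (Q.projCover mu).1
  obtain ⟨v, hv⟩ := Module.projective_lifting_property f u h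
  refine ⟨v, fun hz => hu ?_⟩
  rw [← hv, hz, LinearMap.comp_zero]

theorem fac_iso {A B : ModuleCat.{0} S} (e : ↥A ≃ₗ[S] ↥B) {mu : Λ} (h : Fac Q mu A) :
    Fac Q mu B := fac_sub Q (f := e.toLinearMap) e.injective h

/-- the maximal submodule of `P mu` -/
theorem exists_cover (mu : Λ) : ∃ p : ↥(Q.P mu) →ₗ[S] ↥(Q.L mu), Function.Surjective p ∧
    ∀ N : Submodule S ↥(Q.P mu), N ≠ ⊤ → N ≤ LinearMap.ker p := by
  obtain ⟨_, p, hp, hs⟩ := Q.projCover mu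
  refine ⟨p, hp, fun N hN => ?_⟩
  by_contra hle
  haveI := Q.simpleL mu
  have hco : IsCoatom (LinearMap.ker p) := LinearMap.isCoatom_ker_of_surjective hp
  apply hN
  apply hs
  rw [sup_comm]
  exact hco.2 _ (lt_of_le_of_ne le_sup_left fun h => hle (h ▸ le_sup_right))

theorem L_nontrivial (mu : Λ) : Nontrivial ↥(Q.L mu) := by
  haveI := Q.simpleL mu
  exact IsSimpleModule.nontrivial S _

theorem fac_L (mu : Λ) : Fac Q mu (Q.L mu) := by
  obtain ⟨p, hp, _⟩ := exists_cover Q mu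
  refine ⟨p, ?_⟩
  rintro rfl
  obtain ⟨x, hx⟩ := @exists_ne _ (L_nontrivial Q mu) (0 : ↥(Q.L mu))
  obtain ⟨y, hy⟩ := hp x
  exact hx hy.symm

theorem P_local {mu : Λ} (N1 N2 : Submodule S ↥(Q.P mu)) (h : N1 ⊔ N2 = ⊤) :
    N1 = ⊤ ∨ N2 = ⊤ := by
  obtain ⟨p, hp, hs⟩ := exists_cover Q mu
  by_contra! hc
  have h1 := sup_le (hs _ hc.1) (hs _ hc.2)
  rw [h, top_le_iff, LinearMap.ker_eq_top] at h1
  obtain ⟨x, hx⟩ := @exists_ne _ (L_nontrivial Q mu) (0 : ↥(Q.L mu))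
  obtain ⟨y, hy⟩ := hp x
  rw [h1] at hy
  exact hx hy.symm

/-- a nonzero map from `P mu` gives a quotient `L mu` of its image -/
theorem range_top {mu : Λ} {M : ModuleCat.{0} S} (u : ↥(Q.P mu) →ₗ[S] ↥M) (hu : u ≠ 0) :
    ∃ v : LinearMap.range u →ₗ[S] ↥(Q.L mu), Function.Surjective v := by
  obtain ⟨p, hp, hs⟩ := exists_cover Q mu
  have hk : LinearMap.ker u ≤ LinearMap.ker p :=
    hs _ (fun h => hu (LinearMap.ker_eq_top.1 h))
  obtain ⟨v, hv⟩ := factor_surj u.rangeRestrict (LinearMap.surjective_rangeRestrict u) p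
    (by rw [LinearMap.ker_rangeRestrict]; exact hk)
  refine ⟨v, fun x => ?_⟩
  obtain ⟨y, hy⟩ := hp x
  exact ⟨u.rangeRestrict y, by rw [← hy, ← hv]; rfl⟩

theorem fac_simple {mu nu : Λ} (h : Fac Q mu (Q.L nu)) : mu = nu := by
  obtain ⟨u, hu⟩ := h
  obtain ⟨v, hv⟩ := range_top Q u hu
  haveI := Q.simpleL nu
  haveI := Q.simpleL mu
  have hr : LinearMap.range u = ⊤ := by
    rcases eq_bot_or_eq_top (LinearMap.range u) with h | h
    · exact absurd (LinearMap.range_eq_bot.1 h) hu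
    · exact h
  let w : ↥(Q.L nu) →ₗ[S] ↥(Q.L mu) :=
    v ∘ₗ ((LinearEquiv.ofEq _ _ hr).trans Submodule.topEquiv).symm.toLinearMap
  have hw : Function.Surjective w := hv.comp (LinearEquiv.surjective _)
  have hw0 : w ≠ 0 := by
    intro h0
    obtain ⟨x, hx⟩ := @exists_ne _ (L_nontrivial Q mu) (0 : ↥(Q.L mu))
    obtain ⟨y, hy⟩ := hw x
    rw [h0] at hy
    exact hx hy.symm
  have hb := LinearMap.bijective_of_ne_zero hw0
  by_contra hne
  exact (Q.nonisoL nu mu (fun h => hne h.symm)).false (LinearEquiv.ofBijective w hb)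

theorem fac_iff (mu : Λ) (M : ModuleCat.{0} S) :
    IsCompFactor S (Q.L mu) M ↔ Fac Q mu M := by
  constructor
  · rintro ⟨A, B, hAB, ⟨e⟩⟩
    have h1 : Fac Q mu (ModuleCat.of S (subquot S A B)) := fac_iso Q e.symm (fac_L Q mu)
    have h2 := fac_quot Q (ses_subquot A B hAB).2.1 h1
    exact fac_sub Q (f := B.subtype) B.injective_subtype h2
  · rintro ⟨u, hu⟩
    obtain ⟨v, hv⟩ := range_top Q u hu
    refine ⟨(LinearMap.ker v).map (LinearMap.range u).subtype, LinearMap.range u,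
      Submodule.map_subtype_le _ _, ⟨?_⟩⟩
    refine (Submodule.quotEquivOfEq _ (LinearMap.ker v) ?_).trans
      (v.quotKerEquivOfSurjective hv)
    exact Submodule.comap_map_eq_of_injective (Submodule.injective_subtype _) _

theorem Filt.ind {DD QQ : ModuleCat.{0} S → Prop} {M : ModuleCat.{0} S} (h : Filt DD M)
    (hz : ∀ X : ModuleCat.{0} S, Subsingleton ↥X → QQ X) (hb : ∀ X, DD X → QQ X)
    (he : ∀ (A B C : ModuleCat.{0} S) (f : ↥A →ₗ[S] ↥B) (g : ↥B →ₗ[S] ↥C), SES f g →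
      QQ A → QQ C → QQ B) : QQ M := by
  induction h with
  | zero M h => exact hz _ h
  | base M h => exact hb _ h
  | ext f g h _ _ ih1 ih2 => exact he _ _ _ f g h ih1 ih2

/-- the simple factors of a module -/
def SimpleFac (P : Λ → Prop) (X : ModuleCat.{0} S) : Prop :=
  ∃ mu, P mu ∧ Nonempty (↥X ≃ₗ[S] ↥(Q.L mu))

theorem Filt.mono {DD EE : ModuleCat.{0} S → Prop} {M : ModuleCat.{0} S} (h : Filt DD M)
    (hb : ∀ X, DD X → EE X) : Filt EE M :=
  h.ind (QQ := Filt EE) (fun X hX => Filt.zero X hX) (fun X hX => Filt.base X (hb X hX))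
    (fun _ _ _ f g hs h1 h2 => Filt.ext f g hs h1 h2)

theorem filt_of_finiteLength {M : Type} [AddCommGroup M] [Module S M]
    (h : IsFiniteLength S M) :
    Filt (SimpleFac Q (fun mu => Fac Q mu (ModuleCat.of S M))) (ModuleCat.of S M) := by
  induction h with
  | of_subsingleton => exact Filt.zero _ (by assumption)
  | @of_simple_quotient M _ _ N hN h ih =>
    refine Filt.ext _ _ (ses_quot N) (ih.mono ?_) (Filt.base _ ?_)
    · rintro X ⟨mu, hmu, e⟩
      exact ⟨mu, fac_sub Q (A := ModuleCat.of S N) (B := ModuleCat.of S M) (ses_quot N).1 hmu, e⟩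
    · obtain ⟨lam, ⟨e⟩⟩ := Q.fullL (ModuleCat.of S (M ⧸ N)) hN
      refine ⟨lam, ?_, ⟨e⟩⟩
      exact fac_quot Q (A := ModuleCat.of S M) (B := ModuleCat.of S (M ⧸ N)) (ses_quot N).2.1
        (fac_iso Q e.symm (fac_L Q lam))

theorem std_fac {lam mu : Λ} (h : Fac Q mu (Q.std lam)) : mu ≤ lam := by
  obtain ⟨K, ⟨e⟩, h1, _⟩ := Q.stdSpec lam
  exact h1 mu ((fac_iff Q _ _).2 (fac_iso Q (B := ModuleCat.of S (↥(Q.P lam) ⧸ K)) e h))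

theorem std_surj (lam : Λ) : ∃ p : ↥(Q.P lam) →ₗ[S] ↥(Q.std lam), Function.Surjective p := by
  obtain ⟨K, ⟨e⟩, _, _⟩ := Q.stdSpec lam
  exact ⟨e.symm.toLinearMap ∘ₗ K.mkQ, e.symm.surjective.comp K.mkQ_surjective⟩

theorem std_univ {lam : Λ} {X : ModuleCat.{0} S} (u : ↥(Q.P lam) →ₗ[S] ↥X)
    (hu : Function.Surjective u) (hX : ∀ mu, Fac Q mu X → mu ≤ lam) :
    ∃ v : ↥(Q.std lam) →ₗ[S] ↥X, Function.Surjective v := by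
  obtain ⟨K, ⟨e⟩, _, h2⟩ := Q.stdSpec lam
  have hK : K ≤ LinearMap.ker u := by
    apply h2
    intro mu hmu
    rw [fac_iff] at hmu
    exact hX mu (fac_iso Q (A := ModuleCat.of S (↥(Q.P lam) ⧸ LinearMap.ker u))
      (u.quotKerEquivOfSurjective hu) hmu)
  refine ⟨K.liftQ u hK ∘ₗ e.toLinearMap, ?_⟩
  intro x
  obtain ⟨y, hy⟩ := hu x
  exact ⟨e.symm (K.mkQ y), by simpa using hy⟩

theorem std_local {lam : Λ} (N1 N2 : Submodule S ↥(Q.std lam)) (h : N1 ⊔ N2 = ⊤) :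
    N1 = ⊤ ∨ N2 = ⊤ := by
  obtain ⟨p, hp⟩ := std_surj Q lam
  have key : ∀ N : Submodule S ↥(Q.std lam), N.comap p = ⊤ → N = ⊤ := by
    intro N hN
    rw [← Submodule.map_comap_eq_of_surjective hp N, hN, Submodule.map_top,
      LinearMap.range_eq_top.2 hp]
  have : N1.comap p ⊔ N2.comap p = ⊤ := by
    rw [eq_top_iff]
    intro x _
    have hx : p x ∈ N1 ⊔ N2 := by rw [h]; trivial
    obtain ⟨a, ha, b, hb, hab⟩ := Submodule.mem_sup.1 hx
    obtain ⟨y, rfl⟩ := hp a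
    rw [Submodule.mem_sup]
    refine ⟨y, ha, x - y, ?_, by abel⟩
    show p (x - y) ∈ N2
    have : p (x - y) = b := by rw [map_sub, ← hab]; abel
    rw [this]; exact hb
  rcases P_local Q _ _ this with h | h
  · exact Or.inl (key _ h)
  · exact Or.inr (key _ h)

theorem chain_nofac {mu : Λ} {M : ModuleCat.{0} S} {n : ℕ}
    (f : Fin (n + 1) → Submodule S ↥M) (hm : Monotone f) (h0 : f 0 = ⊥) (j : ℕ) (hj : j < n + 1)
    (h : ∀ i : Fin n, i.val < j →
      ¬ Fac Q mu (ModuleCat.of S (subquot S (f i.castSucc) (f i.succ)))) :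
    ¬ Fac Q mu (ModuleCat.of S (f ⟨j, hj⟩)) := by
  have := filt_of_chain (DD := fun X => ¬ Fac Q mu X) f hm h0 j hj h
  refine this.ind (QQ := fun X => ¬ Fac Q mu X) ?_ (fun X hX => hX) ?_
  · rintro X hX ⟨u, hu⟩
    exact hu (by ext x; exact Subsingleton.elim _ _)
  · intro A B C a b hs hA hC hB
    rcases fac_mid Q hs hB with h | h
    · exact hA h
    · exact hC h

theorem fac_of_simple {mu : Λ} {X : ModuleCat.{0} S} (hX : IsSimpleModule S ↥X)
    (h : Fac Q mu X) : Nonempty (↥X ≃ₗ[S] ↥(Q.L mu)) := by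
  obtain ⟨lam, ⟨e⟩⟩ := Q.fullL X hX
  have := fac_simple Q (fac_iso Q e h)
  subst this
  exact ⟨e⟩

theorem std_top (lam : Λ) : ∃ (R : ModuleCat.{0} S) (i : ↥R →ₗ[S] ↥(Q.std lam))
    (p : ↥(Q.std lam) →ₗ[S] ↥(Q.L lam)), SES i p ∧ ∀ mu, Fac Q mu R → mu < lam := by
  obtain ⟨n, f, hm, h0, hn, hsimp, hcard⟩ := Q.multOne lam
  have hcard' := Nat.card_eq_one_iff_unique.1 hcard
  obtain ⟨⟨huniq⟩, ⟨⟨i0, ⟨e⟩⟩⟩⟩ := hcard'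
  have hother : ∀ i : Fin n, i ≠ i0 →
      ¬ Fac Q lam (ModuleCat.of S (subquot S (f i.castSucc) (f i.succ))) := by
    intro i hi hf
    have := huniq ⟨i, fac_of_simple Q (hsimp i) hf⟩ ⟨i0, ⟨e⟩⟩
    exact hi (congrArg Subtype.val this)
  -- no factor below
  have hbelow : ¬ Fac Q lam (ModuleCat.of S (f i0.castSucc)) := by
    refine chain_nofac Q f hm h0 i0.val (by omega) ?_
    intro i hi
    exact hother i (fun h => by rw [h] at hi; exact lt_irrefl _ hi)
  -- everything lies in f i0.succ
  have habove : ∀ j : ℕ, ∀ hj : j < n + 1, i0.val + 1 ≤ j → ∀ u : ↥(Q.P lam) →ₗ[S] ↥(Q.std lam),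
      LinearMap.range u ≤ f ⟨j, hj⟩ → LinearMap.range u ≤ f i0.succ := by
    intro j
    induction j with
    | zero => intro hj h; omega
    | succ j ih =>
      intro hj hle u hu
      rcases Nat.lt_or_ge i0.val j with hlt | hge
      · refine ih (by omega) hlt u ?_
        have hno := hother ⟨j, by omega⟩ (fun h => by rw [← h] at hlt; simp at hlt)
        by_contra hcon
        apply hno
        refine ⟨Submodule.mkQ _ ∘ₗ LinearMap.codRestrict (f (Fin.succ ⟨j, by omega⟩)) u
          (fun x => hu ⟨x, rfl⟩), fun hz => hcon ?_⟩
        rintro _ ⟨x, rfl⟩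
        have := LinearMap.congr_fun hz x
        simp only [LinearMap.comp_apply, LinearMap.zero_apply] at this
        have h3 := (Submodule.Quotient.mk_eq_zero _).1 this
        exact h3
      · obtain rfl : i0.val = j := by omega
        exact hu
  obtain ⟨p, hp⟩ := std_surj Q lam
  have htop : f i0.succ = ⊤ := by
    rw [eq_top_iff, ← LinearMap.range_eq_top.2 hp]
    refine habove n (by omega) (by omega) p ?_
    have : f ⟨n, by omega⟩ = ⊤ := hn
    rw [this]; exact le_top
  have hs := ses_subquot (f i0.castSucc) (f i0.succ) (hm (Fin.castSucc_le_succ _))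
  let e2 : ↥(Q.std lam) ≃ₗ[S] ↥(f i0.succ) :=
    ((LinearEquiv.ofEq _ _ htop).trans Submodule.topEquiv).symm
  refine ⟨ModuleCat.of S (f i0.castSucc), Submodule.subtype _,
    e.toLinearMap ∘ₗ Submodule.mkQ _ ∘ₗ e2.toLinearMap, ⟨Submodule.injective_subtype _, ?_, ?_⟩, ?_⟩
  · exact e.surjective.comp ((Submodule.mkQ_surjective _).comp e2.surjective)
  · rw [LinearMap.ker_comp_of_ker_eq_bot _ (LinearEquiv.ker e), LinearMap.ker_comp,
      Submodule.ker_mkQ]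
    erw [Submodule.range_subtype]
    ext x
    rfl
  · intro mu hmu
    refine lt_of_le_of_ne (std_fac Q (fac_sub Q (f := Submodule.subtype _)
      (Submodule.injective_subtype _) hmu)) ?_
    rintro rfl
    exact hbelow hmu

theorem costd_fac {lam mu : Λ} (h : Fac Q mu (Q.costd lam)) : mu ≤ lam := by
  obtain ⟨K, ⟨e⟩, h1, _⟩ := Q.costdSpec lam
  exact h1 mu ((fac_iff Q _ _).2 (fac_iso Q (B := ModuleCat.of S K) e h))

theorem costd_univ {lam : Λ} {X : ModuleCat.{0} S} (u : ↥X →ₗ[S] ↥(Q.I lam))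
    (hu : Function.Injective u) (hX : ∀ mu, Fac Q mu X → mu ≤ lam) :
    ∃ v : ↥X →ₗ[S] ↥(Q.costd lam), Function.Injective v := by
  obtain ⟨W, ⟨e⟩, _, h2⟩ := Q.costdSpec lam
  have hK : LinearMap.range u ≤ W := by
    apply h2
    intro mu hmu
    rw [fac_iff] at hmu
    exact hX mu (fac_iso Q (A := ModuleCat.of S (LinearMap.range u))
      (LinearEquiv.ofInjective u hu).symm hmu)
  refine ⟨e.symm.toLinearMap ∘ₗ LinearMap.codRestrict W u (fun x => hK ⟨x, rfl⟩), ?_⟩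
  refine e.symm.injective.comp ?_
  intro x y hxy
  exact hu (congrArg Subtype.val hxy)

theorem costd_socle (lam : Λ) : ∃ j : ↥(Q.L lam) →ₗ[S] ↥(Q.costd lam), Function.Injective j ∧
    ∀ N : Submodule S ↥(Q.costd lam), N ⊓ LinearMap.range j = ⊥ → N = ⊥ := by
  obtain ⟨_, i, hi, hess⟩ := Q.injHull lam
  obtain ⟨W, ⟨e⟩, _, h2⟩ := Q.costdSpec lam
  have hK : LinearMap.range i ≤ W := by
    apply h2
    intro mu hmu
    rw [fac_iff] at hmu
    exact (fac_simple Q (fac_iso Q (A := ModuleCat.of S (LinearMap.range i))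
      (LinearEquiv.ofInjective i hi).symm hmu)).le
  let a : ↥(Q.costd lam) →ₗ[S] ↥(Q.I lam) := W.subtype ∘ₗ e.toLinearMap
  have ha : Function.Injective a := W.injective_subtype.comp e.injective
  let j : ↥(Q.L lam) →ₗ[S] ↥(Q.costd lam) :=
    e.symm.toLinearMap ∘ₗ LinearMap.codRestrict W i (fun x => hK ⟨x, rfl⟩)
  have haj : ∀ x, a (j x) = i x := by
    intro x
    simp [a, j]
  refine ⟨j, ?_, ?_⟩
  · intro x y hxy
    apply hi
    rw [← haj, ← haj, hxy]
  · intro N hN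
    have : N.map a = ⊥ := by
      apply hess
      rw [eq_bot_iff]
      rintro _ ⟨⟨x, hx, rfl⟩, ⟨y, hy⟩⟩
      have : j y = x := ha (by rw [haj]; exact hy)
      have hx0 : x ∈ N ⊓ LinearMap.range j := ⟨hx, ⟨y, this⟩⟩
      rw [hN] at hx0
      have : x = 0 := hx0
      simp [this]
    rw [eq_bot_iff]
    intro x hx
    have : a x ∈ N.map a := ⟨x, hx, rfl⟩
    rw [‹N.map a = ⊥›] at this
    exact ha (by rw [map_zero]; exact this)

theorem costd_inj (lam : Λ) : ∃ (C : ModuleCat.{0} S) (a : ↥(Q.costd lam) →ₗ[S] ↥(Q.I lam))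
    (b : ↥(Q.I lam) →ₗ[S] ↥C), SES a b ∧ ∀ M : ModuleCat.{0} S,
      (∀ mu, Fac Q mu M → mu ≤ lam) → ∀ f : ↥M →ₗ[S] ↥C, f = 0 := by
  obtain ⟨W, ⟨e⟩, h1, h2⟩ := Q.costdSpec lam
  refine ⟨ModuleCat.of S (↥(Q.I lam) ⧸ W), W.subtype ∘ₗ e.toLinearMap, W.mkQ,
    (ses_quot W).iso_left (A' := Q.costd lam) e, ?_⟩
  intro M hM f
  let A : Submodule S ↥(Q.I lam) := (LinearMap.range f).comap W.mkQ
  have hWA : W ≤ A := by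
    intro x hx
    show W.mkQ x ∈ LinearMap.range f
    rw [(Submodule.Quotient.mk_eq_zero W).2 hx |> (show W.mkQ x = 0 from ·)]
    exact Submodule.zero_mem _
  have hA : A ≤ W := by
    apply h2
    intro mu hmu
    rw [fac_iff] at hmu
    rcases fac_mid Q (ses_subquot W A hWA) hmu with h | h
    · exact h1 mu ((fac_iff Q _ _).2 h)
    · -- A / W embeds in range f
      apply hM
      have hr : Fac Q mu (ModuleCat.of S (LinearMap.range f)) := by
        let g : A →ₗ[S] LinearMap.range f :=
          LinearMap.codRestrict _ (W.mkQ ∘ₗ A.subtype) (fun x => x.2)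
        have hg : ∀ x : A, g x = 0 ↔ x ∈ W.comap A.subtype := by
          intro x
          rw [← Subtype.coe_inj]
          exact Submodule.Quotient.mk_eq_zero W
        let g' : subquot S W A →ₗ[S] LinearMap.range f :=
          (W.comap A.subtype).liftQ g (fun x hx => (hg x).2 hx)
        have hg' : Function.Injective g' := by
          rw [← LinearMap.ker_eq_bot]
          apply Submodule.ker_liftQ_eq_bot
          intro x hx
          exact (hg x).1 hx
        exact fac_sub Q (A := ModuleCat.of S (subquot S W A))
          (B := ModuleCat.of S (LinearMap.range f)) (f := g') hg' h
      exact fac_quot Q (B := ModuleCat.of S (LinearMap.range f)) (f := f.rangeRestrict)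
        (LinearMap.surjective_rangeRestrict f) hr
  ext x
  obtain ⟨y, hy⟩ := W.mkQ_surjective (f x)
  have hyA : y ∈ A := ⟨x, hy.symm⟩
  rw [← hy]
  exact (Submodule.Quotient.mk_eq_zero W).2 (hA hyA)

variable [IsArtinianRing S] [IsNoetherianRing S]

theorem filt_simple {M : ModuleCat.{0} S} (hM : Module.Finite S ↥M) :
    Filt (SimpleFac Q (fun mu => Fac Q mu M)) M :=
  filt_of_finiteLength Q
    (isFiniteLength_iff_isNoetherian_isArtinian.2 ⟨inferInstance, inferInstance⟩)

/-- devissage -/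
theorem devissage {QQ : ModuleCat.{0} S → Prop} {M : ModuleCat.{0} S}
    (hM : Module.Finite S ↥M)
    (hz : ∀ X : ModuleCat.{0} S, Subsingleton ↥X → QQ X)
    (he : ∀ (A B C : ModuleCat.{0} S) (f : ↥A →ₗ[S] ↥B) (g : ↥B →ₗ[S] ↥C), SES f g →
      QQ A → QQ C → QQ B)
    (hb : ∀ mu, Fac Q mu M → QQ (Q.L mu)) : QQ M := by
  refine (filt_simple Q hM).ind hz ?_ he
  rintro X ⟨mu, hmu, ⟨e⟩⟩
  exact he _ _ _ _ _ (ses_iso_l _ _ e.symm) (hb mu hmu) (hz _ (inferInstanceAs (Subsingleton PUnit)))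

end QHbasic

end QHProof

namespace QHProof

open CategoryTheory QHPaper

section QHhom

variable {S : Type} [Ring S] {Λ : Type} [Fintype Λ] [PartialOrder Λ] (Q : QHData S Λ)

/-- the standard modules with index larger than `lam` -/
def StdGT (lam : Λ) (X : ModuleCat.{0} S) : Prop :=
  ∃ nu, lam < nu ∧ Nonempty (↥X ≃ₗ[S] ↥(Q.std nu))

theorem proj_std (lam : Λ) : ∃ (K : ModuleCat.{0} S) (i : ↥K →ₗ[S] ↥(Q.P lam))
    (p : ↥(Q.P lam) →ₗ[S] ↥(Q.std lam)), SES i p ∧ Filt (StdGT Q lam) K := by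
  obtain ⟨n, f, g, ⟨hm, h0, hn, hsec⟩, hle, hcard⟩ := Q.projFilt lam
  obtain ⟨⟨huniq⟩, ⟨⟨i0, hi0⟩⟩⟩ := Nat.card_eq_one_iff_unique.1 hcard
  obtain ⟨m, rfl⟩ : ∃ m, n = m + 1 := ⟨n - 1, by have := i0.2; omega⟩
  obtain ⟨e⟩ := hsec (Fin.last m)
  have htop : f (Fin.last m).succ = ⊤ := by rw [Fin.succ_last]; exact hn
  have hs := ses_subquot (f (Fin.last m).castSucc) (f (Fin.last m).succ)
    (hm (Fin.castSucc_le_succ _))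
  let e2 : ↥(Q.P lam) ≃ₗ[S] ↥(f (Fin.last m).succ) :=
    ((LinearEquiv.ofEq _ _ htop).trans Submodule.topEquiv).symm
  have hse : SES (A := ModuleCat.of S (f (Fin.last m).castSucc)) (B := Q.P lam)
      (C := Q.std (g (Fin.last m))) (Submodule.subtype _)
      (e.toLinearMap ∘ₗ Submodule.mkQ _ ∘ₗ e2.toLinearMap) := by
    refine ⟨Submodule.injective_subtype _, ?_, ?_⟩
    · exact e.surjective.comp ((Submodule.mkQ_surjective _).comp e2.surjective)
    · rw [LinearMap.ker_comp_of_ker_eq_bot _ (LinearEquiv.ker e), LinearMap.ker_comp,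
        Submodule.ker_mkQ]
      erw [Submodule.range_subtype]
      ext x
      rfl
  have hg : g (Fin.last m) = lam := by
    obtain ⟨R, i, p, hp, _⟩ := std_top Q (g (Fin.last m))
    have hsurj : Function.Surjective (p ∘ₗ (e.toLinearMap ∘ₗ Submodule.mkQ _ ∘ₗ e2.toLinearMap)) :=
      hp.2.1.comp hse.2.1
    refine (fac_simple Q
      ⟨p ∘ₗ (e.toLinearMap ∘ₗ Submodule.mkQ _ ∘ₗ e2.toLinearMap), fun hz => ?_⟩).symm
    obtain ⟨x, hx⟩ := @exists_ne _ (L_nontrivial Q (g (Fin.last m))) 0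
    obtain ⟨y, hy⟩ := hsurj x
    rw [hz] at hy
    exact hx hy.symm
  have hfil : Filt (StdGT Q lam) (ModuleCat.of S (f (Fin.last m).castSucc)) := by
    refine filt_of_chain f hm h0 m (by omega) ?_
    intro i hi
    refine ⟨g i, lt_of_le_of_ne (hle i) ?_, hsec i⟩
    intro h
    have := congrArg Subtype.val (huniq ⟨i, h.symm⟩ ⟨Fin.last m, hg⟩)
    rw [show i = Fin.last m from this] at hi
    simp at hi
  have hex : ∃ q : ↥(Q.P lam) →ₗ[S] ↥(Q.std (g (Fin.last m))),
      SES (A := ModuleCat.of S (f (Fin.last m).castSucc)) (Submodule.subtype _) q := ⟨_, hse⟩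
  rw [hg] at hex
  obtain ⟨q, hq⟩ := hex
  exact ⟨_, _, _, hq, hfil⟩

theorem std_hom {nu : Λ} {X : ModuleCat.{0} S} (h : ¬ Fac Q nu X) : V 0 (Q.std nu) X := by
  rw [V_zero_iff]
  intro f
  obtain ⟨p, hp⟩ := std_surj Q nu
  have : f ∘ₗ p = 0 := by
    by_contra hne
    exact h ⟨_, hne⟩
  ext x
  obtain ⟨y, rfl⟩ := hp x
  exact LinearMap.congr_fun this y

theorem V_filt {DD : ModuleCat.{0} S → Prop} {K Y : ModuleCat.{0} S} (hK : Filt DD K) (i : ℕ)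
    (h : ∀ X, DD X → V i X Y) : V i K Y :=
  hK.ind (QQ := fun X => V i X Y) (fun X hX => V_subsing_l i) h
    (fun _ _ _ _ _ hs h1 h2 => V.mid_l hs h1 h2)

theorem V_std_costd (lam : Λ) : ∀ (i : ℕ) (mu : Λ), V (i + 1) (Q.std lam) (Q.costd mu) := by
  haveI : WellFoundedGT Λ := Finite.to_wellFoundedGT
  induction lam using WellFoundedGT.induction with
  | ind lam ih =>
  intro i mu
  obtain ⟨K, a, p, hs, hK⟩ := proj_std Q lam
  cases i with
  | succ i =>
    refine V.right_l hs (V_filt hK _ ?_) (V_proj (Q.projCover lam).1 _)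
    rintro X ⟨nu, hnu, ⟨e⟩⟩
    exact V.iso_l e.symm (ih nu hnu i mu)
  | zero =>
    by_cases hle : lam ≤ mu
    · obtain ⟨C, b, c, hs', hC⟩ := costd_inj Q mu
      refine V.left_r hs' (V_zero_iff.2 ?_) (V_inj (Q.injHull mu).1 _)
      exact hC _ (fun nu hnu => (std_fac Q hnu).trans hle)
    · refine V.right_l hs (V_filt hK _ ?_) (V_proj (Q.projCover lam).1 _)
      rintro X ⟨nu, hnu, ⟨e⟩⟩
      refine V.iso_l e.symm (std_hom Q (fun hf => hle (hnu.le.trans (costd_fac Q hf))))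

variable [IsArtinianRing S] [IsNoetherianRing S]

theorem P_finite (lam : Λ) : Module.Finite S ↥(Q.P lam) := by
  obtain ⟨p, hp, hs⟩ := exists_cover Q lam
  obtain ⟨x, hx⟩ := @exists_ne _ (L_nontrivial Q lam) 0
  obtain ⟨y, rfl⟩ := hp x
  refine ⟨⟨{y}, ?_⟩⟩
  by_contra hne
  refine hx (hs _ hne ?_)
  exact Submodule.subset_span (by simp)

theorem std_finite (lam : Λ) : Module.Finite S ↥(Q.std lam) := by
  obtain ⟨p, hp⟩ := std_surj Q lam
  haveI := P_finite Q lam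
  exact Module.Finite.of_surjective p hp

theorem SES.fin {A B C : ModuleCat.{0} S} {f : ↥A →ₗ[S] ↥B} {g : ↥B →ₗ[S] ↥C}
    (h : SES f g) (hB : Module.Finite S ↥B) : Module.Finite S ↥A ∧ Module.Finite S ↥C :=
  ⟨Module.Finite.of_injective f h.1, Module.Finite.of_surjective g h.2.1⟩

theorem SES.fin_mid {A B C : ModuleCat.{0} S} {f : ↥A →ₗ[S] ↥B} {g : ↥B →ₗ[S] ↥C}
    (h : SES f g) (hA : Module.Finite S ↥A) (hC : Module.Finite S ↥C) : Module.Finite S ↥B := by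
  have : IsNoetherian S ↥B := isNoetherian_of_range_eq_ker f g h.2.2
  infer_instance

/-- `M` has no maps to any `L lam`, then it is zero -/
theorem exists_top {M : ModuleCat.{0} S} (hM : Module.Finite S ↥M) (hn : Nontrivial ↥M) :
    ∃ lam, ∃ u : ↥M →ₗ[S] ↥(Q.L lam), u ≠ 0 := by
  obtain ⟨N, hN⟩ := IsCoatomic.exists_coatom (Submodule S ↥M)
  have hsim : IsSimpleModule S (↥M ⧸ N) := isSimpleModule_iff_isCoatom.2 hN
  obtain ⟨lam, ⟨e⟩⟩ := Q.fullL (ModuleCat.of S (↥M ⧸ N)) hsim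
  refine ⟨lam, e.toLinearMap ∘ₗ N.mkQ, fun hz => hN.1 ?_⟩
  rw [eq_top_iff]
  intro x _
  have := LinearMap.congr_fun hz x
  have h2 : N.mkQ x = 0 := e.injective (by simpa using this)
  exact (Submodule.Quotient.mk_eq_zero N).1 h2

theorem V_dev {M X : ModuleCat.{0} S} (hX : Module.Finite S ↥X) (i : ℕ)
    (h : ∀ mu, Fac Q mu X → V i M (Q.L mu)) : V i M X :=
  devissage Q (QQ := fun X => V i M X) hX (fun X hX => V_subsing_r i)
    (fun _ _ _ _ _ hs h1 h2 => V.mid_r hs h1 h2) h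

theorem V_dev_l {M X : ModuleCat.{0} S} (hX : Module.Finite S ↥X) (i : ℕ)
    (h : ∀ mu, Fac Q mu X → V i (Q.L mu) M) : V i X M :=
  devissage Q (QQ := fun X => V i X M) hX (fun X hX => V_subsing_l i)
    (fun _ _ _ _ _ hs h1 h2 => V.mid_l hs h1 h2) h

theorem surj_L {lam : Λ} {M : ModuleCat.{0} S} (u : ↥M →ₗ[S] ↥(Q.L lam)) (hu : u ≠ 0) :
    Function.Surjective u := by
  haveI := Q.simpleL lam
  exact LinearMap.surjective_of_ne_zero hu

theorem filt_std_sub (hcf : ∀ lam, Module.Finite S ↥(Q.costd lam)) {M : ModuleCat.{0} S}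
    (hM : Module.Finite S ↥M) (N : Submodule S ↥M) :
    (∀ mu, V 1 (ModuleCat.of S N) (Q.costd mu)) → Filt (IsD Q.std) (ModuleCat.of S N) := by
  induction N using WellFoundedLT.induction with
  | ind N ih =>
  intro hN
  by_cases hsub : Subsingleton N
  · exact Filt.zero _ hsub
  haveI hnt : Nontrivial N := not_subsingleton_iff_nontrivial.1 hsub
  have hNf : Module.Finite S N := inferInstance
  haveI : WellFoundedLT Λ := Finite.to_wellFoundedLT
  obtain ⟨lam, ⟨u, hu⟩, hmin⟩ := (wellFounded_lt (α := Λ)).has_min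
    {lam | ∃ u : N →ₗ[S] ↥(Q.L lam), u ≠ 0} (exists_top Q (M := ModuleCat.of S N) hNf hnt)
  have h0 : ∀ nu, nu < lam → V 0 (ModuleCat.of S N) (Q.L nu) := by
    intro nu hnu
    rw [V_zero_iff]
    intro v
    by_contra hv
    exact hmin nu ⟨v, hv⟩ hnu
  have h1 : ∀ nu, nu < lam → V 1 (ModuleCat.of S N) (Q.L nu) := by
    intro nu hnu
    obtain ⟨j, hj, _⟩ := costd_socle Q nu
    refine V.left_r (ses_coker j hj) ?_ (hN nu)
    refine V_dev Q ((ses_coker j hj).fin (hcf nu)).2 0 ?_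
    intro mu hmu
    exact h0 mu (lt_of_le_of_lt (costd_fac Q (fac_quot Q (ses_coker j hj).2.1 hmu)) hnu)
  obtain ⟨R, i, p, hs, hR⟩ := std_top Q lam
  have hVR : V 1 (ModuleCat.of S N) R := V_dev Q (hs.fin (std_finite Q lam)).1 1
    (fun mu hmu => h1 mu (hR mu hmu))
  obtain ⟨v, hv⟩ := V_one_lift hs hVR (X := ModuleCat.of S N) u
  have hvs : Function.Surjective v := by
    have hus := surj_L Q (M := ModuleCat.of S N) u hu
    rw [← LinearMap.range_eq_top]
    have hsup : LinearMap.range v ⊔ LinearMap.ker p = ⊤ := by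
      rw [eq_top_iff]
      intro x _
      obtain ⟨y, hy⟩ := hus (p x)
      rw [Submodule.mem_sup]
      refine ⟨v y, ⟨y, rfl⟩, x - v y, ?_, by abel⟩
      rw [LinearMap.mem_ker, map_sub, ← hy, ← hv]
      simp
    rcases std_local Q _ _ hsup with h | h
    · exact h
    · exfalso
      obtain ⟨x, hx⟩ := @exists_ne _ (L_nontrivial Q lam) 0
      obtain ⟨y, rfl⟩ := hs.2.1 x
      exact hx (show y ∈ LinearMap.ker p by rw [h]; trivial)
  have hsk := ses_ker (B := ModuleCat.of S N) v hvs
  let K := (LinearMap.ker v).map N.subtype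
  let e : LinearMap.ker v ≃ₗ[S] K :=
    Submodule.equivMapOfInjective N.subtype N.injective_subtype (LinearMap.ker v)
  have hKN : K < N := by
    refine lt_of_le_of_ne (Submodule.map_subtype_le _ _) ?_
    intro h
    apply hu
    rw [← hv]
    ext x
    have hx : (x : ↥M) ∈ K := by rw [h]; exact x.2
    obtain ⟨y, hy, hyx⟩ := hx
    have : y = x := Subtype.ext hyx
    subst this
    have : v y = 0 := hy
    simp [this]
  have hK : ∀ mu, V 1 (ModuleCat.of S K) (Q.costd mu) := by
    intro mu
    refine V.iso_l (A := ModuleCat.of S (LinearMap.ker v)) e ?_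
    exact V.left_l hsk (hN mu) (V_std_costd Q lam 1 mu)
  refine Filt.ext _ _ hsk ?_ (Filt.base _ ⟨lam, ⟨LinearEquiv.refl _ _⟩⟩)
  exact Filt.iso _ (ModuleCat.of S K) _ ⟨e.symm⟩ (ih K hKN hK)

theorem filt_std_of_V (hcf : ∀ lam, Module.Finite S ↥(Q.costd lam)) {M : ModuleCat.{0} S}
    (hM : Module.Finite S ↥M) (h : ∀ mu, V 1 M (Q.costd mu)) : Filt (IsD Q.std) M :=
  Filt.iso _ _ _ ⟨Submodule.topEquiv⟩ (filt_std_sub Q hcf hM ⊤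
    (fun mu => V.iso_l (B := ModuleCat.of S (⊤ : Submodule S ↥M)) Submodule.topEquiv.symm (h mu)))

/-- `Ext^i(M, costd) = 0` for `i > n` -/
def W (n : ℕ) (M : ModuleCat.{0} S) : Prop := ∀ i, n < i → ∀ mu, V i M (Q.costd mu)

theorem W.of_std (lam : Λ) : W Q 0 (Q.std lam) := by
  intro i hi mu
  obtain ⟨j, rfl⟩ : ∃ j, i = j + 1 := ⟨i - 1, by omega⟩
  exact V_std_costd Q lam j mu

theorem W.of_filt {M : ModuleCat.{0} S} (h : Filt (IsD Q.std) M) : W Q 0 M := by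
  intro i hi mu
  refine V_filt h i ?_
  rintro X ⟨lam, ⟨e⟩⟩
  exact V.iso_l e.symm (W.of_std Q lam i hi mu)

theorem W.mono {n m : ℕ} {M : ModuleCat.{0} S} (h : W Q n M) (hnm : n ≤ m) : W Q m M :=
  fun i hi mu => h i (by omega) mu

theorem W.iso {n : ℕ} {M N : ModuleCat.{0} S} (e : ↥M ≃ₗ[S] ↥N) (h : W Q n M) : W Q n N :=
  fun i hi mu => V.iso_l e (h i hi mu)

theorem W.dev {n : ℕ} {M : ModuleCat.{0} S} (hM : Module.Finite S ↥M)
    (h : ∀ mu, Fac Q mu M → W Q n (Q.L mu)) : W Q n M :=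
  fun i hi mu => V_dev_l Q hM i (fun nu hnu => h nu hnu i hi mu)

theorem W.right {A B C : ModuleCat.{0} S} {f : ↥A →ₗ[S] ↥B} {g : ↥B →ₗ[S] ↥C}
    (h : SES f g) {n : ℕ} (hA : W Q n A) (hB : W Q (n + 1) B) : W Q (n + 1) C := by
  intro i hi mu
  obtain ⟨j, rfl⟩ : ∃ j, i = j + 1 := ⟨i - 1, by omega⟩
  exact V.right_l h (hA j (by omega) mu) (hB _ hi mu)

theorem W.left {A B C : ModuleCat.{0} S} {f : ↥A →ₗ[S] ↥B} {g : ↥B →ₗ[S] ↥C}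
    (h : SES f g) {n : ℕ} (hB : W Q n B) (hC : W Q (n + 1) C) : W Q n A :=
  fun i hi mu => V.left_l h (hB i hi mu) (hC (i + 1) (by omega) mu)

theorem W.simple (lam : Λ) : ∃ n, W Q n (Q.L lam) := by
  haveI : WellFoundedLT Λ := Finite.to_wellFoundedLT
  induction lam using WellFoundedLT.induction with
  | ind lam ih =>
  choose n hn using fun (x : {mu // mu < lam}) => ih x.1 x.2
  obtain ⟨b, hb⟩ := (Set.finite_range n).bddAbove
  obtain ⟨R, i, p, hs, hR⟩ := std_top Q lam
  refine ⟨b + 1, W.right Q hs ?_ ((W.of_std Q lam).mono Q (by omega))⟩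
  refine W.dev Q (hs.fin (std_finite Q lam)).1 ?_
  intro mu hmu
  exact (hn ⟨mu, hR mu hmu⟩).mono Q (hb ⟨_, rfl⟩)

theorem W.bound : ∃ n, ∀ M : ModuleCat.{0} S, Module.Finite S ↥M → W Q n M := by
  choose n hn using W.simple Q
  obtain ⟨b, hb⟩ := (Set.finite_range n).bddAbove
  exact ⟨b, fun M hM => W.dev Q hM (fun mu _ => (hn mu).mono Q (hb ⟨_, rfl⟩))⟩

theorem W.of_LR (n : ℕ) : ∀ M : ModuleCat.{0} S, LR (Filt (IsD Q.std)) n M → W Q n M := by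
  induction n with
  | zero => intro M h; exact W.of_filt Q h
  | succ n ih =>
    rintro M ⟨X, K, i, q, hX, hs, hK⟩
    exact W.right Q hs (ih K hK) ((W.of_filt Q hX).mono Q (by omega))

theorem W.toLR (hcf : ∀ lam, Module.Finite S ↥(Q.costd lam)) (n : ℕ) :
    ∀ M : ModuleCat.{0} S, Module.Finite S ↥M → W Q n M → LR (Filt (IsD Q.std)) n M := by
  induction n with
  | zero => intro M hM h; exact filt_std_of_V Q hcf hM (fun mu => h 1 (by omega) mu)
  | succ n ih =>
    intro M hM h
    obtain ⟨m, q, hq⟩ := Module.Finite.exists_fin' S ↥M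
    have hs := ses_ker (B := ModuleCat.of S (Fin m → S)) q hq
    have hf : Module.Finite S (Fin m → S) := inferInstance
    have hV : ∀ (i : ℕ) mu, V (i + 1) (ModuleCat.of S (Fin m → S)) (Q.costd mu) :=
      fun i mu => V_proj (P := ModuleCat.of S (Fin m → S))
        (inferInstanceAs (Module.Projective S (Fin m → S))) i
    refine ⟨_, _, _, _, filt_std_of_V Q hcf (M := ModuleCat.of S (Fin m → S)) hf (hV 0), hs,
      ih _ (hs.fin hf).1 (W.left Q hs ?_ h)⟩
    intro i hi mu
    obtain ⟨j, rfl⟩ : ∃ j, i = j + 1 := ⟨i - 1, by omega⟩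
    exact hV j mu

theorem wfdLE_iff (hcf : ∀ lam, Module.Finite S ↥(Q.costd lam)) {n : ℕ} {M : ModuleCat.{0} S}
    (hM : Module.Finite S ↥M) : WfdLE S Q M n ↔ W Q n M := by
  have hiff : InStdFilt S Q = Filt (IsD Q.std) := by
    funext X
    exact propext (filt_iff Q.std X)
  constructor
  · intro h
    refine W.of_LR Q n M (LR.ofFin (Filt.iso _) ?_)
    unfold WfdLE at h
    rw [hiff] at h
    exact h
  · intro h
    unfold WfdLE
    rw [hiff]
    exact (W.toLR Q hcf n M hM h).toFin

theorem wfd_le (hcf : ∀ lam, Module.Finite S ↥(Q.costd lam)) {n : ℕ} {M : ModuleCat.{0} S}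
    (hM : Module.Finite S ↥M) : wfd S Q M ≤ n ↔ W Q n M := by
  obtain ⟨b, hb⟩ := W.bound Q
  have hne : {d | WfdLE S Q M d}.Nonempty := ⟨b, (wfdLE_iff Q hcf hM).2 (hb M hM)⟩
  constructor
  · intro h
    exact ((wfdLE_iff Q hcf hM).1 (Nat.sInf_mem hne)).mono Q h
  · intro h
    exact Nat.sInf_le ((wfdLE_iff Q hcf hM).2 h)

end QHhom

end QHProof

namespace QHProof

open CategoryTheory QHPaper

section QHdual

variable {S : Type} [Ring S] {Λ : Type} [Fintype Λ] [PartialOrder Λ] {Q : QHData S Λ}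
variable [IsArtinianRing S] [IsNoetherianRing S] (du : Duality S Q)

theorem D_zero {A B : ModuleCat.{0} S} (hA : Module.Finite S ↥A) (hB : Module.Finite S ↥B) :
    du.Dmap (0 : ↥A →ₗ[S] ↥B) = 0 := by
  have := du.Dadd hA hB 0 0
  rw [add_zero] at this
  exact left_eq_add.1 this

theorem D_ses {A B C : ModuleCat.{0} S} {f : ↥A →ₗ[S] ↥B} {g : ↥B →ₗ[S] ↥C}
    (h : SES f g) (hB : Module.Finite S ↥B) : SES (du.Dmap g) (du.Dmap f) :=
  du.Dexact (h.fin hB).1 hB (h.fin hB).2 f g h.1 h.2.1 h.2.2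

theorem D_of_inj {A B : ModuleCat.{0} S} {f : ↥A →ₗ[S] ↥B} (h : Function.Injective f)
    (hB : Module.Finite S ↥B) : Function.Surjective (du.Dmap f) :=
  (D_ses du (ses_coker f h) hB).2.1

theorem D_of_surj {A B : ModuleCat.{0} S} {f : ↥A →ₗ[S] ↥B} (h : Function.Surjective f)
    (hA : Module.Finite S ↥A) : Function.Injective (du.Dmap f) :=
  (D_ses du (ses_ker f h) hA).1

theorem fin_of_subsing {A : ModuleCat.{0} S} (h : Subsingleton ↥A) : Module.Finite S ↥A :=
  inferInstance

theorem D_subsing {A : ModuleCat.{0} S} (h : Subsingleton ↥A) : Subsingleton ↥(du.D A) := by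
  have hA : Module.Finite S ↥A := inferInstance
  have h1 := du.Did A hA
  have h2 : (LinearMap.id : ↥A →ₗ[S] ↥A) = 0 := by ext x; exact Subsingleton.elim _ _
  rw [h2, D_zero du hA hA] at h1
  refine ⟨fun x y => ?_⟩
  have hx := LinearMap.congr_fun h1 x
  have hy := LinearMap.congr_fun h1 y
  simp only [LinearMap.zero_apply, LinearMap.id_apply] at hx hy
  rw [← hx, ← hy]

theorem D_iso {A B : ModuleCat.{0} S} (hA : Module.Finite S ↥A) (e : ↥A ≃ₗ[S] ↥B) :
    Nonempty (↥(du.D A) ≃ₗ[S] ↥(du.D B)) := by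
  have hB : Module.Finite S ↥B := Module.Finite.equiv e
  refine ⟨LinearEquiv.ofLinear (du.Dmap e.symm.toLinearMap) (du.Dmap e.toLinearMap) ?_ ?_⟩
  · rw [← du.Dcomp hB hA hB, ← du.Did B hB]
    congr 1
    ext x
    simp
  · rw [← du.Dcomp hA hB hA, ← du.Did A hA]
    congr 1
    ext x
    simp

theorem D_full {A B : ModuleCat.{0} S} (hA : Module.Finite S ↥A) (hB : Module.Finite S ↥B)
    (h : ↥(du.D B) →ₗ[S] ↥(du.D A)) : ∃ f : ↥A →ₗ[S] ↥B, du.Dmap f = h :=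
  (du.Dfull hA hB).2 h

theorem DS_inj : Module.Injective S ↥(du.D (ModuleCat.of S S)) := by
  have hS : Module.Finite S ↥(ModuleCat.of S S) := inferInstanceAs (Module.Finite S S)
  have hDS := du.finD _ hS
  apply Module.Baer.injective
  intro J g
  have hJ : Module.Finite S ↥(ModuleCat.of S J) := inferInstanceAs (Module.Finite S J)
  let inc : ↥(ModuleCat.of S J) →ₗ[S] ↥(ModuleCat.of S S) := Submodule.subtype J
  have hinc : Function.Surjective (du.Dmap inc) := D_of_inj du (Submodule.injective_subtype J) hS
  obtain ⟨e⟩ := du.Dinvol _ hS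
  have hp : Module.Projective S ↥(du.D (du.D (ModuleCat.of S S))) :=
    Module.Projective.of_equiv' (M := S) e.symm
  obtain ⟨w, hw⟩ := Module.projective_lifting_property (du.Dmap inc)
    (du.Dmap (A := ModuleCat.of S J) (B := du.D (ModuleCat.of S S)) g) hinc
  obtain ⟨g', rfl⟩ := D_full du hS hDS w
  rw [← du.Dcomp hJ hS hDS] at hw
  have h := (du.Dfull hJ hDS).1 hw
  exact ⟨g', fun x mem => LinearMap.congr_fun h ⟨x, mem⟩⟩

theorem I_finite (du : Duality S Q) (lam : Λ) : Module.Finite S ↥(Q.I lam) := by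
  have hS : Module.Finite S ↥(ModuleCat.of S S) := inferInstanceAs (Module.Finite S S)
  have hDS := du.finD _ hS
  obtain ⟨_, i, hi, hess⟩ := Q.injHull lam
  obtain ⟨e⟩ := du.DL lam
  obtain ⟨x, hx⟩ := @exists_ne _ (L_nontrivial Q lam) 0
  have hsurj : Function.Surjective (LinearMap.toSpanSingleton S ↥(Q.L lam) x) := by
    refine surj_L Q (M := ModuleCat.of S S) _ (fun h => hx ?_)
    have := LinearMap.congr_fun h (1 : S)
    simpa using this
  have hinj := D_of_surj du (A := ModuleCat.of S S) hsurj hS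
  obtain ⟨h, hh⟩ := (DS_inj du).out i hi (du.Dmap (A := ModuleCat.of S S)
    (LinearMap.toSpanSingleton S ↥(Q.L lam) x) ∘ₗ e.symm.toLinearMap)
  have hk : LinearMap.ker h = ⊥ := by
    apply hess
    rw [eq_bot_iff]
    rintro _ ⟨hz, ⟨y, rfl⟩⟩
    have h0 : h (i y) = 0 := hz
    rw [hh] at h0
    have h1 : e.symm y = 0 := hinj (by rw [map_zero]; exact h0)
    have : y = 0 := by simpa using h1
    simp [this]
  exact Module.Finite.of_injective h (LinearMap.ker_eq_bot.1 hk)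

theorem costd_finite (du : Duality S Q) (lam : Λ) : Module.Finite S ↥(Q.costd lam) := by
  obtain ⟨C, a, b, hs, _⟩ := costd_inj Q lam
  exact (hs.fin (I_finite du lam)).1

theorem fac_D {mu : Λ} {M : ModuleCat.{0} S} (hM : Module.Finite S ↥M)
    (h : Fac Q mu (du.D M)) : Fac Q mu M := by
  refine (devissage Q (QQ := fun X => Module.Finite S ↥X ∧ (Fac Q mu (du.D X) → Fac Q mu M))
    hM ?_ ?_ ?_).2 h
  · intro X hX
    refine ⟨fin_of_subsing hX, ?_⟩
    rintro ⟨u, hu⟩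
    have := D_subsing du hX
    exact absurd (by ext x; exact Subsingleton.elim _ _) hu
  · intro A B C f g hs hA hC
    have hB := hs.fin_mid hA.1 hC.1
    refine ⟨hB, fun hf => ?_⟩
    rcases fac_mid Q (D_ses du hs hB) hf with h | h
    · exact hC.2 h
    · exact hA.2 h
  · intro nu hnu
    refine ⟨Q.finiteL nu, fun hf => ?_⟩
    obtain ⟨e⟩ := du.DL nu
    rw [fac_simple Q (fac_iso Q e hf)]
    exact hnu

theorem exists_socle (Q : QHData S Λ) {M : ModuleCat.{0} S} (hM : Module.Finite S ↥M)
    (hn : Nontrivial ↥M) : ∃ lam, ∃ u : ↥(Q.L lam) →ₗ[S] ↥M, Function.Injective u := by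
  haveI : IsAtomic (Submodule S ↥M) :=
    isAtomic_of_orderBot_wellFounded_lt (wellFounded_lt (α := Submodule S ↥M))
  obtain ⟨N, hN⟩ := IsAtomic.exists_atom (Submodule S ↥M)
  have hsim : IsSimpleModule S N := isSimpleModule_iff_isAtom.2 hN
  obtain ⟨lam, ⟨e⟩⟩ := Q.fullL (ModuleCat.of S N) hsim
  exact ⟨lam, N.subtype ∘ₗ e.symm.toLinearMap, N.injective_subtype.comp e.symm.injective⟩

theorem Dstd_sub (lam : Λ) :
    ∃ v : ↥(du.D (Q.std lam)) →ₗ[S] ↥(Q.costd lam), Function.Injective v := by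
  have hsf := std_finite Q lam
  obtain ⟨R, i0, p, hs, _⟩ := std_top Q lam
  obtain ⟨hI, i, hi, _⟩ := Q.injHull lam
  obtain ⟨eL⟩ := du.DL lam
  have hp := D_of_surj du hs.2.1 hsf
  obtain ⟨e, he⟩ := hI.out (du.Dmap p) hp (i ∘ₗ eL.toLinearMap)
  have hinj : Function.Injective e := by
    rw [← LinearMap.ker_eq_bot]
    by_contra hne
    have hnt : Nontrivial (LinearMap.ker e) := Submodule.nontrivial_iff_ne_bot.2 hne
    have hDf := du.finD _ hsf
    obtain ⟨mu, u, hu⟩ := exists_socle Q (M := ModuleCat.of S (LinearMap.ker e))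
      (inferInstanceAs (Module.Finite S (LinearMap.ker e))) hnt
    obtain ⟨em⟩ := du.DL mu
    obtain ⟨s, hsd⟩ := D_full du hsf (Q.finiteL mu)
      ((LinearMap.ker e).subtype ∘ₗ u ∘ₗ em.toLinearMap)
    have hDs : Function.Injective (du.Dmap s) := by
      rw [hsd]
      exact (Submodule.injective_subtype _).comp (hu.comp em.injective)
    have hDL : Nontrivial ↥(du.D (Q.L mu)) := by
      haveI := L_nontrivial Q mu
      exact em.toEquiv.nontrivial
    have hs0 : s ≠ 0 := by
      rintro rfl
      rw [D_zero du hsf (Q.finiteL mu)] at hDs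
      obtain ⟨x, hx⟩ := exists_ne (0 : ↥(du.D (Q.L mu)))
      exact hx (hDs rfl)
    haveI := Q.simpleL mu
    have hco : IsCoatom (LinearMap.ker s) :=
      LinearMap.isCoatom_ker_of_surjective (surj_L Q s hs0)
    have hle : LinearMap.ker p ≤ LinearMap.ker s := by
      by_contra hnle
      have htop : LinearMap.ker s ⊔ LinearMap.ker p = ⊤ :=
        hco.2 _ (lt_of_le_of_ne le_sup_left fun h => hnle (h ▸ le_sup_right))
      rcases std_local Q _ _ htop with h | h
      · exact hco.1 h
      · obtain ⟨x, hx⟩ := @exists_ne _ (L_nontrivial Q lam) 0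
        obtain ⟨y, rfl⟩ := hs.2.1 x
        exact hx (show y ∈ LinearMap.ker p by rw [h]; trivial)
    obtain ⟨v, hv⟩ := factor_surj p hs.2.1 s hle
    have hc : du.Dmap s = du.Dmap p ∘ₗ du.Dmap v := by
      rw [← hv]; exact du.Dcomp hsf (Q.finiteL lam) (Q.finiteL mu) p v
    obtain ⟨x, hx⟩ := exists_ne (0 : ↥(du.D (Q.L mu)))
    have h1 : e (du.Dmap s x) = 0 := by
      rw [hsd]; exact (u (em x)).2
    rw [hc] at h1
    have h2 : i (eL (du.Dmap v x)) = 0 := by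
      rw [← h1]; exact (he _).symm
    have h3 : du.Dmap v x = 0 := eL.injective (hi (by rw [h2]; simp))
    apply hx
    apply hDs
    rw [hc, map_zero]
    simp [h3]
  exact costd_univ Q e hinj (fun mu hmu => std_fac Q (fac_D du hsf hmu))

theorem std_Dcostd (lam : Λ) :
    ∃ v : ↥(Q.std lam) →ₗ[S] ↥(du.D (Q.costd lam)), Function.Surjective v := by
  have hcf := costd_finite du lam
  have hDf := du.finD _ hcf
  obtain ⟨j, hj, hess⟩ := costd_socle Q lam
  obtain ⟨c, hc, _⟩ := exists_cover Q lam
  obtain ⟨eL⟩ := du.DL lam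
  have hjs := D_of_inj du hj hcf
  haveI := (Q.projCover lam).1
  obtain ⟨w, hw⟩ := Module.projective_lifting_property (du.Dmap j) (eL.symm.toLinearMap ∘ₗ c) hjs
  refine std_univ Q w ?_ (fun mu hmu => costd_fac Q (fac_D du hcf hmu))
  rw [← LinearMap.range_eq_top]
  by_contra hne
  have hnt : Nontrivial (↥(du.D (Q.costd lam)) ⧸ LinearMap.range w) :=
    Submodule.Quotient.nontrivial_iff.2 hne
  obtain ⟨mu, u, hu⟩ := exists_top Q
    (M := ModuleCat.of S (↥(du.D (Q.costd lam)) ⧸ LinearMap.range w))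
    (inferInstanceAs (Module.Finite S (↥(du.D (Q.costd lam)) ⧸ LinearMap.range w))) hnt
  obtain ⟨em⟩ := du.DL mu
  obtain ⟨s, hsd⟩ := D_full du (Q.finiteL mu) hcf
    (em.symm.toLinearMap ∘ₗ u ∘ₗ (LinearMap.range w).mkQ)
  have hDs0 : du.Dmap s ≠ 0 := by
    intro hz
    apply hu
    refine LinearMap.ext fun x => ?_
    obtain ⟨y, rfl⟩ := (LinearMap.range w).mkQ_surjective x
    have := LinearMap.congr_fun (hsd.symm.trans hz) y
    simpa using this
  have hs0 : s ≠ 0 := by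
    rintro rfl
    exact hDs0 (D_zero du (Q.finiteL mu) hcf)
  haveI := Q.simpleL mu
  have hle : LinearMap.range s ≤ LinearMap.range j := by
    have h1 : LinearMap.range s ⊓ LinearMap.range j ≠ ⊥ := fun h =>
      hs0 (LinearMap.range_eq_bot.1 (hess _ h))
    have h2 : (LinearMap.range j).comap s = ⊤ := by
      rcases eq_bot_or_eq_top ((LinearMap.range j).comap s) with h | h
      · exfalso
        apply h1
        rw [eq_bot_iff]
        rintro _ ⟨⟨x, rfl⟩, hx⟩
        have : x ∈ (LinearMap.range j).comap s := hx
        rw [h] at this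
        have : x = 0 := this
        simp [this]
      · exact h
    rintro _ ⟨x, rfl⟩
    have : x ∈ (LinearMap.range j).comap s := by rw [h2]; trivial
    exact this
  obtain ⟨v, hv⟩ := (ses_coker j hj).factor s (by
    ext x
    exact (Submodule.Quotient.mk_eq_zero _).2 (hle ⟨x, rfl⟩))
  have hcomp : du.Dmap s = du.Dmap v ∘ₗ du.Dmap j := by
    rw [← hv]; exact du.Dcomp (Q.finiteL mu) (Q.finiteL lam) hcf v j
  have h0 : ∀ y, du.Dmap s (w y) = 0 := by
    intro y
    rw [hsd]
    have : (LinearMap.range w).mkQ (w y) = 0 :=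
      (Submodule.Quotient.mk_eq_zero _).2 ⟨y, rfl⟩
    simp only [LinearMap.comp_apply]
    rw [this]; simp
  have hv0 : ∀ z, du.Dmap v z = 0 := by
    intro z
    obtain ⟨y, hy⟩ := hc (eL z)
    have h1 := h0 y
    rw [hcomp, LinearMap.comp_apply] at h1
    have h2 : du.Dmap j (w y) = z := by
      have := LinearMap.congr_fun hw y
      simp only [LinearMap.comp_apply] at this
      rw [this, hy]; simp
    rw [h2] at h1
    exact h1
  apply hDs0
  ext x
  rw [hcomp]
  simp [hv0]

theorem D_std (lam : Λ) : Nonempty (↥(du.D (Q.std lam)) ≃ₗ[S] ↥(Q.costd lam)) := by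
  have hcf := costd_finite du lam
  obtain ⟨a, ha⟩ := Dstd_sub du lam
  obtain ⟨t, ht⟩ := std_Dcostd du lam
  have hb := D_of_surj du ht (std_finite Q lam)
  obtain ⟨e⟩ := du.Dinvol _ hcf
  let c : ↥(Q.costd lam) →ₗ[S] ↥(Q.costd lam) := a ∘ₗ du.Dmap t ∘ₗ e.symm.toLinearMap
  have hc : Function.Injective c := ha.comp (hb.comp e.symm.injective)
  have hcs := IsArtinian.surjective_of_injective_endomorphism c hc
  refine ⟨LinearEquiv.ofBijective a ⟨ha, fun x => ?_⟩⟩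
  obtain ⟨y, hy⟩ := hcs x
  exact ⟨_, hy⟩

theorem D_costd (lam : Λ) : Nonempty (↥(du.D (Q.costd lam)) ≃ₗ[S] ↥(Q.std lam)) := by
  obtain ⟨e1⟩ := D_std du lam
  obtain ⟨e2⟩ := D_iso du (du.finD _ (std_finite Q lam)) e1
  obtain ⟨e3⟩ := du.Dinvol _ (std_finite Q lam)
  exact ⟨e2.symm.trans e3⟩

theorem D_filt {E F : Λ → ModuleCat.{0} S} (hE : ∀ lam, Module.Finite S ↥(E lam))
    (hEF : ∀ lam, Nonempty (↥(du.D (E lam)) ≃ₗ[S] ↥(F lam))) {M : ModuleCat.{0} S}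
    (h : Filt (IsD E) M) : Module.Finite S ↥M ∧ Filt (IsD F) (du.D M) := by
  refine h.ind (QQ := fun M => Module.Finite S ↥M ∧ Filt (IsD F) (du.D M)) ?_ ?_ ?_
  · intro X hX
    exact ⟨fin_of_subsing hX, Filt.zero _ (D_subsing du hX)⟩
  · rintro X ⟨lam, ⟨e⟩⟩
    have := hE lam
    have hX : Module.Finite S ↥X := Module.Finite.equiv e.symm
    obtain ⟨e1⟩ := D_iso du hX e
    obtain ⟨e2⟩ := hEF lam
    exact ⟨hX, Filt.base _ ⟨lam, ⟨e1.trans e2⟩⟩⟩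
  · intro A B C f g hs hA hC
    have hB := hs.fin_mid hA.1 hC.1
    exact ⟨hB, Filt.ext _ _ (D_ses du hs hB) hC.2 hA.2⟩

theorem D_RR {E F : Λ → ModuleCat.{0} S} (hE : ∀ lam, Module.Finite S ↥(E lam))
    (hEF : ∀ lam, Nonempty (↥(du.D (E lam)) ≃ₗ[S] ↥(F lam))) (n : ℕ) :
    ∀ M : ModuleCat.{0} S, RR (Filt (IsD E)) n M → LR (Filt (IsD F)) n (du.D M) := by
  induction n with
  | zero => intro M h; exact (D_filt du hE hEF h).2
  | succ n ih =>
    rintro M ⟨X, C, i, q, hX, hs, hC⟩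
    have hX' := D_filt du hE hEF hX
    exact ⟨_, _, _, _, hX'.2, D_ses du hs hX'.1, ih C hC⟩

theorem D_LR {E F : Λ → ModuleCat.{0} S} (hE : ∀ lam, Module.Finite S ↥(E lam))
    (hEF : ∀ lam, Nonempty (↥(du.D (E lam)) ≃ₗ[S] ↥(F lam))) (n : ℕ) :
    ∀ M : ModuleCat.{0} S, LR (Filt (IsD E)) n M → RR (Filt (IsD F)) n (du.D M) := by
  induction n with
  | zero => intro M h; exact (D_filt du hE hEF h).2
  | succ n ih =>
    rintro M ⟨X, C, i, q, hX, hs, hC⟩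
    have hX' := D_filt du hE hEF hX
    exact ⟨_, _, _, _, hX'.2, D_ses du hs hX'.1, ih C hC⟩

theorem gfdLE_iff {n : ℕ} {M : ModuleCat.{0} S} (hM : Module.Finite S ↥M) :
    GfdLE S Q M n ↔ WfdLE S Q (du.D M) n := by
  have h1 : InStdFilt S Q = Filt (IsD Q.std) := by
    funext X
    exact propext (filt_iff Q.std X)
  have h2 : InCostdFilt S Q = Filt (IsD Q.costd) := by
    funext X
    exact propext (filt_iff Q.costd X)
  unfold GfdLE WfdLE
  rw [h1, h2]
  constructor
  · intro h
    exact (D_RR du (costd_finite du) (D_costd du) n M (RR.ofFin (Filt.iso _) h)).toFin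
  · intro h
    have := D_LR du (std_finite Q) (D_std du) n _ (LR.ofFin (Filt.iso _) h)
    exact (RR.iso (Filt.iso _) n _ _ (du.Dinvol M hM) this).toFin

theorem gfd_eq {M : ModuleCat.{0} S} (hM : Module.Finite S ↥M) :
    gfd S Q M = wfd S Q (du.D M) := by
  unfold gfd wfd
  congr 1
  ext n
  exact gfdLE_iff du hM

end QHdual

end QHProof

namespace QHProof

open CategoryTheory QHPaper

section QHfinal

variable {S : Type} [Ring S] {Λ : Type} [Fintype Λ] [PartialOrder Λ] {Q : QHData S Λ}

/-- injective dimension through vanishing of Ext on cyclic modules -/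
theorem RR_inj (n : ℕ) : ∀ Y : ModuleCat.{0} S,
    (∀ J : Submodule S S, V (n + 1) (ModuleCat.of S (S ⧸ J)) Y) →
    RR (fun X => Module.Injective S ↥X) n Y := by
  induction n with
  | zero =>
    intro Y h
    apply Module.Baer.injective
    intro J g
    obtain ⟨v, hv⟩ := V_one_ext (ses_quot J) (h J) g
    exact ⟨v, fun x mem => LinearMap.congr_fun hv ⟨x, mem⟩⟩
  | succ n ih =>
    intro Y h
    obtain ⟨⟨J, hJ, f, hf⟩⟩ := (inferInstance : EnoughInjectives (ModuleCat.{0} S)).presentation Y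
    have hJ' : Module.Injective S ↥J := Module.injective_module_of_injective_object S ↥J
    have hf' : Function.Injective f.hom := (ModuleCat.mono_iff_injective f).1 hf
    have hs := ses_coker f.hom hf'
    exact ⟨J, _, f.hom, _, hJ', hs, ih _ (fun I => V.right_r hs (V_inj hJ' n) (h I))⟩

variable [IsArtinianRing S] [IsNoetherianRing S]

theorem gfd_L (du : Duality S Q) (lam : Λ) : gfd S Q (Q.L lam) = wfd S Q (Q.L lam) := by
  have hcf := costd_finite du
  rw [gfd_eq du (Q.finiteL lam)]
  obtain ⟨e⟩ := du.DL lam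
  have h1 := Q.finiteL lam
  have h2 := du.finD _ h1
  apply le_antisymm
  · rw [wfd_le Q hcf h2]
    exact ((wfd_le Q hcf h1).1 le_rfl).iso Q e.symm
  · rw [wfd_le Q hcf h1]
    exact ((wfd_le Q hcf h2).1 le_rfl).iso Q e

theorem wfd_costd (du : Duality S Q) (hA : PropA S Q) (lam : Λ) :
    wfd S Q (Q.costd lam) = wfd S Q (Q.L lam) := by
  have hcf := costd_finite du
  have hdev : ∀ M : ModuleCat.{0} S, Module.Finite S ↥M → (∀ mu, Fac Q mu M → mu ≤ lam) →
      W Q (wfd S Q (Q.L lam)) M := by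
    intro M hM hfac
    refine W.dev Q hM (fun mu hmu => ?_)
    rw [← wfd_le Q hcf (Q.finiteL mu)]
    rcases (hfac mu hmu).eq_or_lt with h | h
    · rw [h]
    · rw [← gfd_L du, ← gfd_L du]
      exact hA mu lam h
  apply le_antisymm
  · rw [wfd_le Q hcf (hcf lam)]
    exact hdev _ (hcf lam) (fun mu hmu => costd_fac Q hmu)
  · by_contra hlt
    push Not at hlt
    obtain ⟨b, hb⟩ : ∃ b, wfd S Q (Q.L lam) = b + 1 := ⟨wfd S Q (Q.L lam) - 1, by omega⟩
    obtain ⟨j, hj, _⟩ := costd_socle Q lam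
    have hs := ses_coker j hj
    have hC := hdev _ (hs.fin (hcf lam)).2
      (fun mu hmu => costd_fac Q (fac_quot Q hs.2.1 hmu))
    rw [hb] at hC
    have hB : W Q b (Q.costd lam) := (wfd_le Q hcf (hcf lam)).1 (by omega)
    have := (wfd_le Q hcf (Q.finiteL lam)).2 (W.left Q hs hB hC)
    omega

theorem W_alg (M : ModuleCat.{0} S) (hM : Module.Finite S ↥M) (du : Duality S Q) :
    W Q (gfdAlg S Q) M := by
  have hcf := costd_finite du
  obtain ⟨b, hb⟩ := W.bound Q
  have hbdd : BddAbove {d | ∃ M : ModuleCat.{0} S, Module.Finite S ↥M ∧ gfd S Q M = d} := by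
    refine ⟨b, ?_⟩
    rintro _ ⟨N, hN, rfl⟩
    rw [gfd_eq du hN, wfd_le Q hcf (du.finD _ hN)]
    exact hb _ (du.finD _ hN)
  have hDM := du.finD _ hM
  have h1 : gfd S Q (du.D M) ≤ gfdAlg S Q := le_csSup hbdd ⟨_, hDM, rfl⟩
  rw [gfd_eq du hDM, wfd_le Q hcf (du.finD _ hDM)] at h1
  obtain ⟨e⟩ := du.Dinvol M hM
  exact h1.iso Q e

theorem injdim_le (du : Duality S Q) (lam : Λ) : injdim S (Q.costd lam) ≤ gfdAlg S Q := by
  apply Nat.sInf_le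
  have : RR (fun X => Module.Injective S ↥X) (gfdAlg S Q) (Q.costd lam) := by
    apply RR_inj
    intro J
    exact W_alg (ModuleCat.of S (S ⧸ J)) (inferInstanceAs (Module.Finite S (S ⧸ J))) du _
      (Nat.lt_succ_self _) lam
  exact this.toFin

theorem propE (du : Duality S Q) (hA : PropA S Q) (hC : PropC S Q) : PropE S Q := by
  intro mu lam h
  have h1 := hC mu
  have h2 := hC lam
  have h3 := hA mu lam h
  rw [gfd_L du, gfd_L du] at h3
  rw [wfd_costd du hA] at h1 h2
  have h4 := injdim_le du lam
  have h5 := injdim_le du mu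
  omega

end QHfinal

end QHProof


open QHPaper in
/-- Let `S` be a connected quasi-hereditary algebra with a simple-preserving
duality whose partial order is minimal for the quasi-hereditary structure. If `S` satisfies
property A and property C, then `S` satisfies property E. -/
theorem stmt16 (k S Λ : Type) [Field k] [Ring S] [Algebra k S] [FiniteDimensional k S]
    [Fintype Λ] [PartialOrder Λ]
    (hconn : ConnectedRing S)
    (QH : QHData S Λ) (dual : Duality S QH) (hmin : MinimalOrder S QH)
    (hA : PropA S QH) (hC : PropC S QH) :
    PropE S QH := by
  haveI : IsArtinianRing S := IsArtinianRing.of_finite k S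
  haveI : IsNoetherianRing S := IsNoetherianRing.of_finite k S
  exact QHProof.propE dual hA hC
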